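/- arXiv:1404.1495 — 3 statements merged into one kernel-verified Lean document; each statement's English description precedes it below -/
import Mathlib

section
/- Let n ≥ 1, P ≥ 1 an integer, and let p : ℝⁿ → ℝ be a continuous probability density (p ≥ 0, ∫ p = 1) with characteristic function Φ(v) = ∫_{ℝⁿ} e^{i⟨v,x⟩} p(x) dx. Suppose: (i) there exist A > 0 and δ > 0 with p(x) ≤ A(1 + ‖x‖)^{−n−δ} and |Φ(v)| ≤ A(1 + ‖v‖)^{−n−δ} for all x, v; (ii) ε > 0 satisfies Σ_{m ∈ ℤⁿ, m ≠ 0} p(x + Pm) ≤ ε for all x ∈ [−P/2, P/2]ⁿ; (iii) there are ν₁, …, νₙ ∈ (0,1) and β₁, …, βₙ > 0 with |Φ(−2πm/P)| ≤ exp( −Σ_{s=1}^n β_s |m_s|^{ν_s} ) for all m ∈ ℤⁿ. Let 2 ≤ q ≤ ∞ with conjugate exponent q' (1/q + 1/q' = 1). Then there exist C > 0 and R₀ > 1 such that for all R ≥ R₀: ‖ p(x) − P^{−n} Σ_{m ∈ ℤⁿ : Σ_s β_s |m_s|^{ν_s} ≤ ln R} Φ(−2πm/P) e^{2πi⟨m,x⟩/P}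 ‖_{L^q([−P/2,P/2]ⁿ)} ≤ ε P^{n/q} + C R^{−1} (ln R)^{(Σ_{s=1}^n 1/ν_s − 1)/q'} (with P^{n/q} interpreted as 1 when q = ∞). -/
open MeasureTheory Complex
open scoped ENNReal

/-!
By Poisson summation the periodization of `p` over `P ℤⁿ` is the Fourier series with coefficients
`P⁻ⁿ Φ(-2πm/P)`. Hence `p` minus the truncated series is the tail of the Fourier series minus the
aliasing sum `∑_{m ≠ 0} p(x + Pm)`, which is at most `ε` on the cube.

Write `Λ(x) = ∑ β_s |x_s|^{ν_s}`, `D = ∑ 1/ν_s` and `T = ln R`. The tail coefficients are at most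
`P⁻ⁿ e^{-Λ(m)}` with `Λ(m) > T`. As `Λ` is subadditive, it varies boundedly over unit cubes, so
their `ℓ¹` norm is controlled by `∫_{Λ > T} e^{-Λ}`. Since `Λ` is homogeneous under an anisotropic
dilation, `{Λ ≤ t}` has volume `t^D vol {Λ ≤ 1}`, and integrating over the level sets gives
`O(e^{-T} T^{D-1})`. This bounds the tail uniformly; together with the bound `e^{-T}` on a single
coefficient and Parseval it also bounds the tail in `L²`, and interpolation gives `L^q`.
-/

variable {ι : Type*}

/-- The inclusion of the lattice `ℤ^ι` into `ℝ^ι`, along which functions are periodized. -/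
def intVec : (ι → ℤ) →+ (ι → ℝ) := (Int.castAddHom ℝ).compLeft ι

@[simp]
lemma intVec_apply (m : ι → ℤ) (k : ι) : intVec m k = m k := rfl

lemma intVec_injective : Function.Injective (intVec (ι := ι)) :=
  fun _ _ h ↦ funext fun k ↦ Int.cast_injective (congrFun h k)

instance [Finite ι] : Countable (intVec (ι := ι)).range :=
  (AddMonoidHom.ofInjective intVec_injective).toEquiv.symm.injective.countable

/-- The half-open unit cube with lower corner `a`, a fundamental domain for the lattice. The set is
written in the form in which `UnitAddTorus.integral_preimage` uses it. -/
def unitCube (a : ι → ℝ) : Set (ι → ℝ) := {x | ∀ i, x i ∈ Set.Ioc (a i) (a i + 1)}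

section Lattice

lemma unitCube_eq_pi (a : ι → ℝ) : unitCube a = Set.univ.pi fun i ↦ Set.Ioc (a i) (a i + 1) := by
  ext x
  simp [unitCube]

lemma measurableSet_unitCube [Countable ι] (a : ι → ℝ) : MeasurableSet (unitCube a) :=
  MeasurableSet.univ_pi' fun _ ↦ measurableSet_Ioc

variable [Fintype ι]

lemma norm_intVec (m : ι → ℤ) : ‖intVec m‖ = ‖m‖ := by
  have h (k : ι) : ‖(m k : ℝ)‖₊ = ‖m k‖₊ := NNReal.eq (Int.norm_cast_real (m k))
  simp [Pi.norm_def, h]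

lemma volume_unitCube (a : ι → ℝ) : volume (unitCube a) = 1 := by
  simp [unitCube_eq_pi, Real.volume_pi_Ioc]

lemma isAddFundamentalDomain_unitCube (a : ι → ℝ) :
    IsAddFundamentalDomain (intVec (ι := ι)).range (unitCube a) volume := by
  refine .mk' (measurableSet_unitCube a).nullMeasurableSet fun x ↦ ?_
  choose m hm hm_unique using fun i ↦ existsUnique_add_zsmul_mem_Ioc one_pos (x i) (a i)
  refine ⟨⟨intVec m, m, rfl⟩, fun i ↦ ?_, ?_⟩
  · simpa [AddSubgroup.vadd_def, add_comm] using hm i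
  · rintro ⟨-, l, rfl⟩ hl
    simp only [AddSubgroup.vadd_def, vadd_eq_add] at hl
    have : l = m := funext fun i ↦ hm_unique i _ (by simpa [add_comm] using hl i)
    simp [this]

lemma lintegral_eq_tsum_unitCube (a : ι → ℝ) (F : (ι → ℝ) → ℝ≥0∞) :
    ∫⁻ x, F x = ∑' m : ι → ℤ, ∫⁻ x in unitCube a, F (x + intVec m) := by
  rw [(isAddFundamentalDomain_unitCube a).lintegral_eq_tsum'',
    ← (AddMonoidHom.ofInjective intVec_injective).toEquiv.tsum_eq]
  simp only [AddSubgroup.vadd_def, vadd_eq_add, add_comm]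
  rfl

lemma integral_eq_tsum_unitCube (a : ι → ℝ) {f : (ι → ℝ) → ℂ} (hf : Integrable f) :
    ∫ x, f x = ∑' m : ι → ℤ, ∫ x in unitCube a, f (x + intVec m) := by
  rw [(isAddFundamentalDomain_unitCube a).integral_eq_tsum'' f hf,
    ← (AddMonoidHom.ofInjective intVec_injective).toEquiv.tsum_eq]
  simp only [AddSubgroup.vadd_def, vadd_eq_add, add_comm]
  rfl

lemma tsum_le_lintegral_of_le_on_unitCube (a : ι → ℝ) {w : (ι → ℤ) → ℝ≥0∞} {F : (ι → ℝ) → ℝ≥0∞}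
    (h : ∀ m, ∀ x ∈ unitCube a, w m ≤ F (x + intVec m)) : ∑' m, w m ≤ ∫⁻ x, F x := by
  rw [lintegral_eq_tsum_unitCube a]
  refine ENNReal.tsum_le_tsum fun m ↦ ?_
  calc w m = ∫⁻ _ in unitCube a, w m := by rw [setLIntegral_const, volume_unitCube, mul_one]
    _ ≤ _ := setLIntegral_mono' (measurableSet_unitCube a) (h m)

lemma norm_le_one_of_mem_unitCube_zero {x : ι → ℝ} (hx : x ∈ unitCube 0) : ‖x‖ ≤ 1 := by
  refine (pi_norm_le_iff_of_nonneg zero_le_one).2 fun i ↦ ?_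
  have := hx i
  simp only [Pi.zero_apply, zero_add, Set.mem_Ioc] at this
  rw [Real.norm_of_nonneg this.1.le]
  exact this.2

end Lattice

section Decay

lemma one_add_norm_rpow_neg_le {E : Type*} [SeminormedAddCommGroup E] {r : ℝ} (hr : 0 ≤ r)
    (x y : E) :
    (1 + ‖x + y‖) ^ (-r) ≤ (1 + ‖x‖) ^ r * (1 + ‖y‖) ^ (-r) := by
  have h_tri : (1 + ‖x‖)⁻¹ * (1 + ‖y‖) ≤ 1 + ‖x + y‖ := by
    rw [inv_mul_le_iff₀ (by positivity)]
    have : ‖y‖ ≤ ‖x + y‖ + ‖x‖ := by simpa using norm_sub_le (x + y) x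
    nlinarith [norm_nonneg x, norm_nonneg (x + y)]
  calc (1 + ‖x + y‖) ^ (-r) ≤ ((1 + ‖x‖)⁻¹ * (1 + ‖y‖)) ^ (-r) :=
        Real.rpow_le_rpow_of_nonpos (by positivity) h_tri (neg_nonpos.2 hr)
    _ = (1 + ‖x‖) ^ r * (1 + ‖y‖) ^ (-r) := by
        rw [Real.mul_rpow (by positivity) (by positivity), Real.inv_rpow (by positivity),
          Real.rpow_neg (by positivity), inv_inv]

variable [Fintype ι]

lemma summable_one_add_norm_rpow_neg {r : ℝ} (hr : Fintype.card ι < r) :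
    Summable fun m : ι → ℤ ↦ (1 + ‖m‖) ^ (-r) := by
  have hr0 : 0 ≤ r := (Nat.cast_nonneg _).trans hr.le
  have hint : Integrable fun x : ι → ℝ ↦ 2 ^ r * (1 + ‖x‖) ^ (-r) :=
    (integrable_one_add_norm (by simpa using hr)).const_mul _
  have hle : ∑' m : ι → ℤ, ENNReal.ofReal ((1 + ‖m‖) ^ (-r)) ≤
      ∫⁻ x : ι → ℝ, ENNReal.ofReal (2 ^ r * (1 + ‖x‖) ^ (-r)) := by
    refine tsum_le_lintegral_of_le_on_unitCube 0 fun m x hx ↦ ENNReal.ofReal_le_ofReal ?_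
    have hshift := one_add_norm_rpow_neg_le hr0 (-x) (x + intVec m)
    rw [neg_add_cancel_left, norm_intVec, norm_neg] at hshift
    refine hshift.trans ?_
    gcongr
    linarith [norm_le_one_of_mem_unitCube_zero hx]
  refine (ENNReal.summable_toReal (ne_top_of_le_ne_top hint.lintegral_lt_top.ne hle)).congr
    fun m ↦ ENNReal.toReal_ofReal (by positivity)

lemma summable_norm_restrict_translates {f : C(ι → ℝ, ℂ)} {A r : ℝ} (hA : 0 ≤ A)
    (hr : Fintype.card ι < r) (hf : ∀ x, ‖f x‖ ≤ A * (1 + ‖x‖) ^ (-r))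
    (K : TopologicalSpace.Compacts (ι → ℝ)) :
    Summable fun m : ι → ℤ ↦ ‖(f.comp (.addRight (intVec m))).restrict K‖ := by
  have hr0 : 0 ≤ r := (Nat.cast_nonneg _).trans hr.le
  obtain ⟨N, hN0, hN⟩ := K.isCompact.isBounded.exists_pos_norm_le
  refine .of_nonneg_of_le (fun _ ↦ norm_nonneg _) (fun m ↦ ?_)
    ((summable_one_add_norm_rpow_neg hr).mul_left (A * (1 + N) ^ r))
  refine (ContinuousMap.norm_le _ (by positivity)).2 fun x ↦ ?_
  calc ‖f (x + intVec m)‖ ≤ A * (1 + ‖(x : ι → ℝ) + intVec m‖) ^ (-r) := hf _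
    _ ≤ A * ((1 + N) ^ r * (1 + ‖m‖) ^ (-r)) := by
        gcongr
        refine (one_add_norm_rpow_neg_le hr0 _ _).trans ?_
        rw [norm_intVec]
        gcongr
        exact hN _ x.2
    _ = A * (1 + N) ^ r * (1 + ‖m‖) ^ (-r) := by ring

lemma one_add_norm_smul_rpow_neg_le {E : Type*} [SeminormedAddCommGroup E] [NormedSpace ℝ E]
    {r P : ℝ} (hr : 0 ≤ r) (hP : 0 < P) (x : E) :
    (1 + ‖P • x‖) ^ (-r) ≤ min 1 P ^ (-r) * (1 + ‖x‖) ^ (-r) := by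
  have hmin : 0 < min 1 P := lt_min one_pos hP
  rw [← Real.mul_rpow hmin.le (by positivity)]
  refine Real.rpow_le_rpow_of_nonpos (by positivity) ?_ (neg_nonpos.2 hr)
  calc min 1 P * (1 + ‖x‖) = min 1 P + min 1 P * ‖x‖ := by ring
    _ ≤ 1 + P * ‖x‖ := by gcongr <;> simp
    _ = 1 + ‖P • x‖ := by rw [norm_smul, Real.norm_of_nonneg hP.le]

lemma integrable_of_norm_le_one_add_norm_rpow_neg {f : (ι → ℝ) → ℂ} (hfc : Continuous f) {A r : ℝ}
    (hr : Fintype.card ι < r) (hf : ∀ x, ‖f x‖ ≤ A * (1 + ‖x‖) ^ (-r)) : Integrable f :=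
  ((integrable_one_add_norm (by simpa using hr)).const_mul A).mono' hfc.aestronglyMeasurable
    (.of_forall hf)

lemma norm_le_sqrt_sum_sq (x : ι → ℝ) : ‖x‖ ≤ √(∑ k, x k ^ 2) :=
  (pi_norm_le_iff_of_nonneg (Real.sqrt_nonneg _)).2 fun k ↦ Real.abs_le_sqrt
    (Finset.single_le_sum (f := fun k ↦ x k ^ 2) (fun _ _ ↦ sq_nonneg _) (Finset.mem_univ k))

lemma one_add_sqrt_sum_sq_rpow_neg_le {r : ℝ} (hr : 0 ≤ r) (x : ι → ℝ) :
    (1 + √(∑ k, x k ^ 2)) ^ (-r) ≤ (1 + ‖x‖) ^ (-r) :=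
  Real.rpow_le_rpow_of_nonpos (by positivity) (add_le_add_right (norm_le_sqrt_sum_sq x) 1)
    (neg_nonpos.2 hr)

end Decay

/-- The quotient map `ℝ^ι → (ℝ/ℤ)^ι`, through which periodizations factor. -/
def torusMk : C(ι → ℝ, UnitAddTorus ι) := ⟨fun x k ↦ (x k : UnitAddCircle), by fun_prop⟩

section Poisson

lemma isQuotientMap_torusMk : Topology.IsQuotientMap (torusMk (ι := ι)) :=
  (IsOpenQuotientMap.piMap fun _ ↦ QuotientAddGroup.isOpenQuotientMap_mk).isQuotientMap

lemma torusMk_eq_iff {x y : ι → ℝ} :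
    torusMk x = torusMk y ↔ ∃ l : ι → ℤ, x = y + intVec l := by
  simp only [funext_iff, torusMk, ContinuousMap.coe_mk, Pi.add_apply, intVec_apply]
  rw [← Classical.skolem (p := fun k (l : ℤ) ↦ x k = y k + l)]
  refine forall_congr' fun k ↦ ?_
  rw [← sub_eq_zero, ← AddCircle.coe_sub, AddCircle.coe_eq_zero_iff]
  simp only [zsmul_one]
  exact exists_congr fun l ↦ by rw [eq_sub_iff_add_eq', eq_comm]

lemma exists_hasSum_translates_torusMk [Finite ι] {f : C(ι → ℝ, ℂ)}
    (hf : ∀ K : TopologicalSpace.Compacts (ι → ℝ),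
      Summable fun m : ι → ℤ ↦ ‖(f.comp (.addRight (intVec m))).restrict K‖) :
    ∃ F : C(UnitAddTorus ι, ℂ), ∀ x, HasSum (fun m ↦ f (x + intVec m)) (F (torusMk x)) := by
  obtain ⟨S, hS⟩ := ContinuousMap.summable_of_locally_summable_norm hf
  have hS_apply (x : ι → ℝ) : HasSum (fun m ↦ f (x + intVec m)) (S x) :=
    ContinuousMap.hasSum_apply hS x
  have hS_factors : Function.FactorsThrough S torusMk := by
    intro x y hxy
    obtain ⟨l, rfl⟩ := torusMk_eq_iff.1 hxy
    refine (hS_apply _).unique ?_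
    simpa [Function.comp_def, add_assoc] using (Equiv.addLeft l).hasSum_iff.2 (hS_apply y)
  refine ⟨isQuotientMap_torusMk.lift S hS_factors, fun x ↦ ?_⟩
  convert hS_apply x
  exact congrArg (fun g : C(ι → ℝ, ℂ) ↦ g x) (isQuotientMap_torusMk.lift_comp S hS_factors)

variable [Fintype ι]

/-- The character `x ↦ e^{2πi⟨m, x⟩}` of `ℝ^ι`, lifted from the torus; the Fourier series below are
series in these functions. -/
noncomputable def latticeChar (m : ι → ℤ) : C(ι → ℝ, ℂ) := (UnitAddTorus.mFourier m).comp torusMk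

lemma latticeChar_eq_exp (m : ι → ℤ) (x : ι → ℝ) :
    latticeChar m x = cexp (2 * Real.pi * I * (∑ k, m k * x k : ℝ)) := by
  simp only [latticeChar, torusMk, UnitAddTorus.mFourier, ContinuousMap.comp_apply,
    ContinuousMap.coe_mk, fourier_coe_apply, ← Complex.exp_sum]
  congr 1
  push_cast
  rw [Finset.mul_sum]
  exact Finset.sum_congr rfl fun k _ ↦ by ring

@[simp]
lemma norm_latticeChar (m : ι → ℤ) (x : ι → ℝ) : ‖latticeChar m x‖ = 1 := by
  simp [latticeChar_eq_exp, Complex.norm_exp]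

lemma latticeChar_add_intVec (m l : ι → ℤ) (x : ι → ℝ) :
    latticeChar m (x + intVec l) = latticeChar m x :=
  congrArg (UnitAddTorus.mFourier m) (torusMk_eq_iff.2 ⟨l, rfl⟩)

lemma mFourierCoeff_eq_integral_of_hasSum_translates {f : (ι → ℝ) → ℂ} (hf : Integrable f)
    {F : UnitAddTorus ι → ℂ} (hF : ∀ x, HasSum (fun l ↦ f (x + intVec l)) (F (torusMk x)))
    (m : ι → ℤ) :
    UnitAddTorus.mFourierCoeff F m = ∫ x, latticeChar (-m) x * f x := by
  have hint : Integrable fun x ↦ latticeChar (-m) x * f x :=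
    hf.bdd_mul (latticeChar (-m)).continuous.aestronglyMeasurable
      (.of_forall fun x ↦ (norm_latticeChar (-m) x).le)
  have hmeas (l : ι → ℤ) : AEStronglyMeasurable
      (fun x ↦ latticeChar (-m) (x + intVec l) * f (x + intVec l))
      (volume.restrict (unitCube 0)) :=
    (hint.comp_add_right (intVec l)).aestronglyMeasurable.restrict
  have hsum : ∑' l, ∫⁻ x in unitCube 0, ‖latticeChar (-m) (x + intVec l) * f (x + intVec l)‖ₑ
      ≠ ∞ := by
    rw [← lintegral_eq_tsum_unitCube 0 fun x ↦ ‖latticeChar (-m) x * f x‖ₑ]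
    exact hint.hasFiniteIntegral.ne
  rw [UnitAddTorus.mFourierCoeff_eq_integral F m 0, integral_eq_tsum_unitCube 0 hint,
    ← integral_tsum hmeas hsum]
  simp only [latticeChar_add_intVec, tsum_mul_left, (hF _).tsum_eq]
  rfl

lemma tsum_translates_eq_tsum_latticeChar {f : C(ι → ℝ, ℂ)} (hfi : Integrable f)
    (hf : ∀ K : TopologicalSpace.Compacts (ι → ℝ),
      Summable fun m : ι → ℤ ↦ ‖(f.comp (.addRight (intVec m))).restrict K‖)
    (hc : Summable fun m : ι → ℤ ↦ ∫ y, latticeChar (-m) y * f y) (x : ι → ℝ) :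
    ∑' m : ι → ℤ, f (x + intVec m) =
      ∑' m : ι → ℤ, (∫ y, latticeChar (-m) y * f y) * latticeChar m x := by
  obtain ⟨F, hF⟩ := exists_hasSum_translates_torusMk hf
  have hcoeff := mFourierCoeff_eq_integral_of_hasSum_translates hfi hF
  rw [(hF x).tsum_eq, ← (UnitAddTorus.hasSum_mFourier_series_apply_of_summable
    (hc.congr fun m ↦ (hcoeff m).symm) (torusMk x)).tsum_eq]
  simp only [hcoeff, smul_eq_mul]
  rfl

lemma tsum_translates_smul_eq_tsum_latticeChar {f : C(ι → ℝ, ℂ)} {A r P : ℝ} (hA : 0 ≤ A)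
    (hr : Fintype.card ι < r) (hf : ∀ x, ‖f x‖ ≤ A * (1 + ‖x‖) ^ (-r)) (hP : 0 < P)
    {c : (ι → ℤ) → ℂ} (hc : Summable c)
    (hcf : ∀ m, c m = (P ^ Fintype.card ι)⁻¹ * ∫ y, latticeChar (-m) (P⁻¹ • y) * f y)
    (x : ι → ℝ) :
    (Summable fun m : ι → ℤ ↦ f (x + P • intVec m)) ∧
    ∑' m : ι → ℤ, f (x + P • intVec m) = ∑' m : ι → ℤ, c m * latticeChar m (P⁻¹ • x) := by
  have hr0 : 0 ≤ r := (Nat.cast_nonneg _).trans hr.le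
  let g : C(ι → ℝ, ℂ) := f.comp ⟨fun y ↦ P • y, by fun_prop⟩
  have hg (y : ι → ℝ) : ‖g y‖ ≤ A * min 1 P ^ (-r) * (1 + ‖y‖) ^ (-r) := by
    rw [mul_assoc]
    exact (hf _).trans (mul_le_mul_of_nonneg_left (one_add_norm_smul_rpow_neg_le hr0 hP y) hA)
  have hg_loc := summable_norm_restrict_translates (by positivity) hr hg
  have hcg (m : ι → ℤ) : ∫ y, latticeChar (-m) y * g y = c m := by
    have := Measure.integral_comp_smul volume
      (fun y : ι → ℝ ↦ latticeChar (-m) (P⁻¹ • y) * f y) P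
    simp only [inv_smul_smul₀ hP.ne', Module.finrank_fintype_fun_eq_card] at this
    rw [hcf m]
    simpa [abs_of_pos hP, g] using this
  have hshift (m : ι → ℤ) : g (P⁻¹ • x + intVec m) = f (x + P • intVec m) := by
    simp [g, smul_inv_smul₀ hP.ne']
  constructor
  · obtain ⟨F, hF⟩ := exists_hasSum_translates_torusMk hg_loc
    exact (hF (P⁻¹ • x)).summable.congr hshift
  · have := tsum_translates_eq_tsum_latticeChar
      (integrable_of_norm_le_one_add_norm_rpow_neg g.continuous hr hg) hg_loc
      (hc.congr fun m ↦ (hcg m).symm) (P⁻¹ • x)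
    simpa only [hshift, hcg] using this

end Poisson

/-- The closed cube `[-P/2, P/2]^ι` on which the `L^q` error is measured. -/
def centeredCube (P : ℝ) : Set (ι → ℝ) := {x | ∀ k, |x k| ≤ P / 2}

section CenteredCube

lemma centeredCube_eq_Icc (P : ℝ) :
    centeredCube P = Set.Icc (fun _ : ι ↦ -(P / 2)) fun _ ↦ P / 2 := by
  ext x
  simp only [centeredCube, abs_le, Set.mem_Icc, Pi.le_def, ← forall_and]
  rfl

lemma measurableSet_centeredCube [Finite ι] (P : ℝ) : MeasurableSet (centeredCube (ι := ι) P) := by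
  rw [centeredCube_eq_Icc]
  exact measurableSet_Icc

variable [Fintype ι]

lemma volume_centeredCube {P : ℝ} (hP : 0 ≤ P) :
    volume (centeredCube (ι := ι) P) = ENNReal.ofReal (P ^ Fintype.card ι) := by
  rw [centeredCube_eq_Icc, Real.volume_Icc_pi, ENNReal.ofReal_pow hP]
  simp

open scoped Pointwise in
lemma inv_smul_centeredCube_ae_eq {P : ℝ} (hP : 0 < P) :
    (P⁻¹ • centeredCube P : Set (ι → ℝ)) =ᵐ[volume] unitCube fun _ ↦ -(1 / 2) := by
  have hsmul : (P⁻¹ • centeredCube P : Set (ι → ℝ)) =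
      Set.Icc (fun _ ↦ -(1 / 2)) (fun _ ↦ -(1 / 2) + 1) := by
    ext x
    rw [Set.mem_smul_set_iff_inv_smul_mem₀ (inv_pos.2 hP).ne', centeredCube_eq_Icc]
    simp only [inv_inv, Set.mem_Icc, Pi.le_def, Pi.smul_apply, smul_eq_mul, ← forall_and]
    refine forall_congr' fun k ↦ ?_
    constructor <;> rintro ⟨h₁, h₂⟩ <;> constructor <;> nlinarith
  rw [hsmul, unitCube_eq_pi]
  exact Measure.univ_pi_Ioc_ae_eq_Icc.symm

end CenteredCube

section Parseval

variable [Fintype ι]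

/-- The normalized Haar measure on the circle, which is the measure used by `UnitAddTorus`. -/
noncomputable local instance : MeasureSpace UnitAddCircle := ⟨AddCircle.haarAddCircle⟩

local instance : Measure.IsAddHaarMeasure (volume : Measure UnitAddCircle) :=
  inferInstanceAs (Measure.IsAddHaarMeasure AddCircle.haarAddCircle)

local instance : IsProbabilityMeasure (volume : Measure UnitAddCircle) :=
  inferInstanceAs (IsProbabilityMeasure AddCircle.haarAddCircle)

lemma hasSum_latticeChar {c : (ι → ℤ) → ℂ} {F : C(UnitAddTorus ι, ℂ)}
    (hF : HasSum (fun m ↦ c m • UnitAddTorus.mFourier m) F) (x : ι → ℝ) :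
    HasSum (fun m ↦ c m * latticeChar m x) (F (torusMk x)) :=
  ContinuousMap.hasSum_apply hF (torusMk x)

lemma summable_smul_mFourier {c : (ι → ℤ) → ℂ} (hc : Summable c) :
    Summable fun m ↦ c m • UnitAddTorus.mFourier m :=
  .of_norm (by simpa only [norm_smul, UnitAddTorus.mFourier_norm, mul_one] using hc.norm)

lemma mFourierCoeff_of_hasSum {c : (ι → ℤ) → ℂ} {F : C(UnitAddTorus ι, ℂ)}
    (hF : HasSum (fun m ↦ c m • UnitAddTorus.mFourier m) F) (m : ι → ℤ) :
    UnitAddTorus.mFourierCoeff F m = c m := by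
  have hF_inner := (innerSL ℂ (UnitAddTorus.mFourierLp 2 m)).hasSum
    ((ContinuousMap.toLp (E := ℂ) 2 (volume : Measure (UnitAddTorus ι)) ℂ).hasSum hF)
  rw [← UnitAddTorus.mFourierCoeff_toLp, ← UnitAddTorus.mFourierBasis_repr,
    HilbertBasis.repr_apply_apply, UnitAddTorus.coe_mFourierBasis]
  refine hF_inner.unique ((hasSum_ite_eq m (c m)).congr_fun fun l ↦ ?_)
  have := orthonormal_iff_ite.1 (UnitAddTorus.orthonormal_mFourier (d := ι)) m l
  simp only [map_smul, innerSL_apply_apply, smul_eq_mul]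
  rw [this]
  obtain rfl | hml := eq_or_ne m l
  · simp
  · simp [hml, hml.symm]

lemma integral_unitCube_norm_sq_tsum_latticeChar {c : (ι → ℤ) → ℂ} (hc : Summable c)
    (a : ι → ℝ) :
    ∫ x in unitCube a, ‖∑' m, c m * latticeChar m x‖ ^ 2 = ∑' m, ‖c m‖ ^ 2 := by
  obtain ⟨F, hF⟩ := summable_smul_mFourier hc
  set f := ContinuousMap.toLp (E := ℂ) 2 (volume : Measure (UnitAddTorus ι)) ℂ F
  have hf : ∫ t, ‖f t‖ ^ 2 = ∫ t, ‖F t‖ ^ 2 := integral_congr_ae <| by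
    filter_upwards [ContinuousMap.coeFn_toLp (𝕜 := ℂ) (p := 2)
      (volume : Measure (UnitAddTorus ι)) F] with t ht
    rw [ht]
  have hparseval := UnitAddTorus.hasSum_sq_mFourierCoeff f
  simp only [f, UnitAddTorus.mFourierCoeff_toLp, mFourierCoeff_of_hasSum hF] at hparseval
  rw [hparseval.tsum_eq, hf, UnitAddTorus.integral_preimage _ a]
  simp only [(hasSum_latticeChar hF _).tsum_eq]
  rfl

end Parseval

section ScaledParseval

variable [Fintype ι]

lemma continuous_tsum_latticeChar {c : (ι → ℤ) → ℂ} (hc : Summable c) :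
    Continuous fun x ↦ ∑' m, c m * latticeChar m x := by
  obtain ⟨F, hF⟩ := summable_smul_mFourier hc
  simp only [(hasSum_latticeChar hF _).tsum_eq]
  fun_prop

lemma integral_centeredCube_norm_sq_tsum_latticeChar {P : ℝ} (hP : 0 < P)
    {c : (ι → ℤ) → ℂ} (hc : Summable c) :
    ∫ x in centeredCube P, ‖∑' m, c m * latticeChar m (P⁻¹ • x)‖ ^ 2 =
      P ^ Fintype.card ι * ∑' m, ‖c m‖ ^ 2 := by
  rw [Measure.setIntegral_comp_smul_of_pos volume
    (fun x : ι → ℝ ↦ ‖∑' m, c m * latticeChar m x‖ ^ 2) (centeredCube P) (inv_pos.2 hP),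
    setIntegral_congr_set (inv_smul_centeredCube_ae_eq hP),
    integral_unitCube_norm_sq_tsum_latticeChar hc]
  simp

end ScaledParseval

section LayerCake

lemma lintegral_exp_neg_eq_lintegral_measure_lt {α : Type*} [MeasurableSpace α] {μ : Measure α}
    [SFinite μ] {g : α → ℝ} (hg : Measurable g) (hg0 : 0 ≤ᵐ[μ] g) :
    ∫⁻ x, ENNReal.ofReal (Real.exp (-g x)) ∂μ =
      ∫⁻ u in Set.Ioi 0, ENNReal.ofReal (Real.exp (-u)) * μ {x | g x < u} := by
  let F (x : α) : ℝ → ℝ≥0∞ := (Set.Ioi (g x)).indicator fun u ↦ ENNReal.ofReal (Real.exp (-u))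
  have hF : Measurable (Function.uncurry F) :=
    Measurable.indicator (s := {z : α × ℝ | g z.1 < z.2})
      (f := fun z ↦ ENNReal.ofReal (Real.exp (-z.2))) (by fun_prop)
      (measurableSet_lt (hg.comp measurable_fst) measurable_snd)
  have hF_fst : ∀ᵐ x ∂μ, ENNReal.ofReal (Real.exp (-g x)) = ∫⁻ u in Set.Ioi 0, F x u := by
    filter_upwards [hg0] with x hx
    have hinter : Set.Ioi (g x) ∩ Set.Ioi 0 = Set.Ioi (g x) :=
      Set.inter_eq_left.2 (Set.Ioi_subset_Ioi hx)
    calc ENNReal.ofReal (Real.exp (-g x))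
        = ∫⁻ u in Set.Ioi (g x), ENNReal.ofReal (Real.exp (-u)) := by
          rw [← integral_exp_neg_Ioi, ofReal_integral_eq_lintegral_ofReal
            (integrableOn_exp_neg_Ioi _) (.of_forall fun u ↦ (Real.exp_pos _).le)]
      _ = ∫⁻ u in Set.Ioi 0, F x u := by
          rw [setLIntegral_indicator measurableSet_Ioi, hinter]
  have hF_snd (u : ℝ) : ∫⁻ x, F x u ∂μ = ENNReal.ofReal (Real.exp (-u)) * μ {x | g x < u} :=
    lintegral_indicator_const (s := {x | g x < u}) (measurableSet_lt hg measurable_const)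
      (ENNReal.ofReal (Real.exp (-u)))
  rw [lintegral_congr_ae hF_fst, lintegral_lintegral_swap hF.aemeasurable]
  simp only [hF_snd]

lemma setLIntegral_exp_neg_lt {α : Type*} [MeasurableSpace α] {μ : Measure α} [SFinite μ]
    {g : α → ℝ} (hg : Measurable g) (S : ℝ) :
    ∫⁻ x in {x | S < g x}, ENNReal.ofReal (Real.exp (-g x)) ∂μ =
      ENNReal.ofReal (Real.exp (-S)) *
        ∫⁻ u in Set.Ioi 0, ENNReal.ofReal (Real.exp (-u)) * μ {x | S < g x ∧ g x < S + u} := by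
  set A := {x | S < g x}
  have hA : MeasurableSet A := measurableSet_lt measurable_const hg
  have hg0 : 0 ≤ᵐ[μ.restrict A] fun x ↦ g x - S := by
    filter_upwards [ae_restrict_mem hA] with x hx using sub_nonneg.2 (le_of_lt hx)
  have hset (u : ℝ) : μ.restrict A {x | g x - S < u} = μ {x | S < g x ∧ g x < S + u} := by
    rw [Measure.restrict_apply' hA]
    congr 1
    ext x
    simp [A, sub_lt_iff_lt_add', and_comm]
  have hexp (x : α) : ENNReal.ofReal (Real.exp (-g x)) =
      ENNReal.ofReal (Real.exp (-S)) * ENNReal.ofReal (Real.exp (-(g x - S))) := by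
    rw [← ENNReal.ofReal_mul (Real.exp_pos _).le, ← Real.exp_add]
    ring_nf
  simp only [hexp]
  rw [lintegral_const_mul _ (by fun_prop),
    lintegral_exp_neg_eq_lintegral_measure_lt (hg.sub_const S) hg0]
  simp only [hset]

lemma integrableOn_exp_neg_mul_one_add_rpow {D : ℝ} (hD : 1 ≤ D) :
    IntegrableOn (fun u ↦ Real.exp (-u) * (1 + u) ^ D) (Set.Ioi 0) := by
  have hgamma : IntegrableOn (fun u ↦ Real.exp (-u) * u ^ D) (Set.Ioi 0) := by
    simpa using Real.GammaIntegral_convergent (s := D + 1) (by linarith)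
  refine Integrable.mono' (((integrableOn_exp_neg_Ioi 0).add hgamma).const_mul (2 ^ (D - 1)))
    (by fun_prop) ?_
  filter_upwards [ae_restrict_mem measurableSet_Ioi] with u hu
  have hu0 : 0 ≤ u := le_of_lt hu
  have hconv : (1 + u) ^ D ≤ 2 ^ (D - 1) * (1 ^ D + u ^ D) := by
    have := NNReal.rpow_add_le_mul_rpow_add_rpow 1 ⟨u, hu0⟩ hD
    exact_mod_cast this
  rw [Real.norm_of_nonneg (by positivity)]
  calc Real.exp (-u) * (1 + u) ^ D ≤ Real.exp (-u) * (2 ^ (D - 1) * (1 ^ D + u ^ D)) := by gcongr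
    _ = 2 ^ (D - 1) * (Real.exp (-u) + Real.exp (-u) * u ^ D) := by
        rw [Real.one_rpow]
        ring

lemma rpow_sub_rpow_le {a b D : ℝ} (hb : 0 < b) (hab : b ≤ a) (hD : 1 ≤ D) :
    a ^ D - b ^ D ≤ D * (a - b) * a ^ (D - 1) := by
  have ha : 0 < a := hb.trans_le hab
  have hbernoulli := one_add_mul_self_le_rpow_one_add (s := b / a - 1) (p := D)
    (by linarith [div_pos hb ha]) hD
  rw [add_sub_cancel, Real.div_rpow hb.le ha.le, le_div_iff₀ (by positivity)] at hbernoulli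
  have hexpand : (1 + D * (b / a - 1)) * a ^ D = a ^ D - D * (a - b) * a ^ (D - 1) := by
    rw [← sub_add_cancel D 1, Real.rpow_add_one ha.ne', add_sub_cancel_right]
    field_simp
    ring
  linarith

lemma add_rpow_sub_rpow_le {S u D : ℝ} (hS : 1 ≤ S) (hu : 0 ≤ u) (hD : 1 ≤ D) :
    (S + u) ^ D - S ^ D ≤ D * S ^ (D - 1) * (1 + u) ^ D :=
  calc (S + u) ^ D - S ^ D ≤ D * (S + u - S) * (S + u) ^ (D - 1) :=
        rpow_sub_rpow_le (by linarith) (by linarith) hD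
    _ ≤ D * (1 + u) * (S * (1 + u)) ^ (D - 1) := by
        gcongr
        · linarith
        · nlinarith
    _ = D * S ^ (D - 1) * ((1 + u) ^ (D - 1) * (1 + u)) := by
        rw [Real.mul_rpow (by linarith) (by linarith)]
        ring
    _ = D * S ^ (D - 1) * (1 + u) ^ D := by
        rw [← Real.rpow_add_one (by linarith), sub_add_cancel]

end LayerCake

/-- The anisotropic weight `Σ_s β_s |x_s|^{ν_s}` that governs the decay of the Fourier coefficients
and defines the truncation. -/
noncomputable def powSum [Fintype ι] (β ν x : ι → ℝ) : ℝ := ∑ s, β s * |x s| ^ ν s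

section PowSum

variable [Fintype ι] {β ν : ι → ℝ}

lemma continuous_powSum (hν : ∀ s, 0 ≤ ν s) : Continuous (powSum β ν) :=
  continuous_finsetSum _ fun s _ ↦
    continuous_const.mul (Continuous.rpow_const (by fun_prop) fun _ ↦ .inr (hν s))

lemma powSum_add_le (hν : ∀ s, ν s ∈ Set.Icc 0 1) (hβ : ∀ s, 0 ≤ β s) (x y : ι → ℝ) :
    powSum β ν (x + y) ≤ powSum β ν x + powSum β ν y := by
  simp only [powSum, ← Finset.sum_add_distrib, ← mul_add]
  gcongr with s
  · exact hβ s
  · exact (Real.rpow_le_rpow (abs_nonneg _) (abs_add_le _ _) (hν s).1).trans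
      (Real.rpow_add_le_add_rpow (abs_nonneg _) (abs_nonneg _) (hν s).1 (hν s).2)

lemma powSum_le_sum_of_norm_le_one (hν : ∀ s, 0 ≤ ν s) (hβ : ∀ s, 0 ≤ β s) {x : ι → ℝ}
    (hx : ‖x‖ ≤ 1) : powSum β ν x ≤ ∑ s, β s :=
  Finset.sum_le_sum fun s _ ↦ mul_le_of_le_one_right (hβ s)
    (Real.rpow_le_one (abs_nonneg _) ((norm_le_pi_norm x s).trans hx) (hν s))

lemma abs_le_of_powSum_le (hν : ∀ s, 0 < ν s) (hβ : ∀ s, 0 < β s) {x : ι → ℝ} {t : ℝ}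
    (hx : powSum β ν x ≤ t) (s : ι) : |x s| ≤ (t / β s) ^ (ν s)⁻¹ := by
  have hterm_nonneg (i : ι) : 0 ≤ β i * |x i| ^ ν i :=
    mul_nonneg (hβ i).le (Real.rpow_nonneg (abs_nonneg _) _)
  have hterm : β s * |x s| ^ ν s ≤ t :=
    (Finset.single_le_sum (fun i _ ↦ hterm_nonneg i) (Finset.mem_univ s)).trans hx
  have ht : 0 ≤ t := (hterm_nonneg s).trans hterm
  rw [Real.le_rpow_inv_iff_of_pos (abs_nonneg _) (div_nonneg ht (hβ s).le) (hν s),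
    le_div_iff₀' (hβ s)]
  exact hterm

lemma setOf_powSum_le_subset_Icc (hν : ∀ s, 0 < ν s) (hβ : ∀ s, 0 < β s) (t : ℝ) :
    {x | powSum β ν x ≤ t} ⊆
      Set.Icc (fun s ↦ -((t / β s) ^ (ν s)⁻¹)) (fun s ↦ (t / β s) ^ (ν s)⁻¹) :=
  fun _ hx ↦ ⟨fun s ↦ (abs_le.1 (abs_le_of_powSum_le hν hβ hx s)).1,
    fun s ↦ (abs_le.1 (abs_le_of_powSum_le hν hβ hx s)).2⟩

lemma volume_powSum_le_ne_top (hν : ∀ s, 0 < ν s) (hβ : ∀ s, 0 < β s) (t : ℝ) :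
    volume {x | powSum β ν x ≤ t} ≠ ∞ :=
  measure_ne_top_of_subset (setOf_powSum_le_subset_Icc hν hβ t) isCompact_Icc.measure_lt_top.ne

lemma finite_setOf_powSum_intVec_le (hν : ∀ s, 0 < ν s) (hβ : ∀ s, 0 < β s) (t : ℝ) :
    {m : ι → ℤ | powSum β ν (intVec m) ≤ t}.Finite := by
  classical
  refine (Set.finite_Icc (fun s ↦ ⌈-((t / β s) ^ (ν s)⁻¹)⌉)
    fun s ↦ ⌊(t / β s) ^ (ν s)⁻¹⌋).subset fun m hm ↦ ?_
  have := setOf_powSum_le_subset_Icc hν hβ t hm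
  exact ⟨fun s ↦ Int.ceil_le.2 (this.1 s), fun s ↦ Int.le_floor.2 (this.2 s)⟩

lemma powSum_rpow_neg_inv_mul (hν : ∀ s, ν s ≠ 0) {t : ℝ} (ht : 0 < t) (x : ι → ℝ) :
    powSum β ν (fun s ↦ t ^ (-(1 / ν s)) * x s) = t⁻¹ * powSum β ν x := by
  simp only [powSum, Finset.mul_sum]
  refine Finset.sum_congr rfl fun s _ ↦ ?_
  have hexp : -(1 / ν s) * ν s = -1 := by
    have := hν s
    field_simp
  rw [abs_mul, Real.mul_rpow (abs_nonneg _) (abs_nonneg _),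
    abs_of_pos (Real.rpow_pos_of_pos ht _), ← Real.rpow_mul ht.le, hexp, Real.rpow_neg_one]
  ring

lemma volume_powSum_le_eq (hν : ∀ s, ν s ≠ 0) {t : ℝ} (ht : 0 < t) :
    volume {x | powSum β ν x ≤ t} =
      ENNReal.ofReal (t ^ ∑ s, 1 / ν s) * volume {x | powSum β ν x ≤ 1} := by
  classical
  let f := Matrix.toLin' (Matrix.diagonal fun s ↦ t ^ (-(1 / ν s)))
  have hpos : 0 < t ^ (-∑ s, 1 / ν s) := Real.rpow_pos_of_pos ht _
  have hdet : LinearMap.det f = t ^ (-∑ s, 1 / ν s) := by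
    simp only [f, LinearMap.det_toLin', Matrix.det_diagonal]
    rw [← Real.rpow_sum_of_pos ht, Finset.sum_neg_distrib]
  have hf_apply (x : ι → ℝ) : f x = fun s ↦ t ^ (-(1 / ν s)) * x s := by
    ext s
    simp [f, Matrix.toLin'_apply, Matrix.mulVec_diagonal]
  have hpreimage : f ⁻¹' {x | powSum β ν x ≤ 1} = {x | powSum β ν x ≤ t} := by
    ext x
    simp only [Set.mem_preimage, Set.mem_ofPred_eq, hf_apply, powSum_rpow_neg_inv_mul hν ht]
    rw [inv_mul_le_iff₀ ht, mul_one]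
  have := Measure.addHaar_preimage_linearMap volume (f := f) (by rw [hdet]; exact hpos.ne')
    {x | powSum β ν x ≤ 1}
  rwa [hpreimage, hdet, abs_of_pos (inv_pos.2 hpos), Real.rpow_neg ht.le, inv_inv] at this

lemma one_le_sum_one_div [Nonempty ι] (hν : ∀ s, ν s ∈ Set.Ioc 0 1) : 1 ≤ ∑ s, 1 / ν s := by
  obtain ⟨s₀⟩ := ‹Nonempty ι›
  calc 1 ≤ 1 / ν s₀ := one_le_one_div (hν s₀).1 (hν s₀).2
    _ ≤ ∑ s, 1 / ν s := Finset.single_le_sum (f := fun s ↦ 1 / ν s)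
        (fun s _ ↦ one_div_nonneg.2 (hν s).1.le) (Finset.mem_univ s₀)

lemma volume_powSum_shell_le (hν : ∀ s, 0 < ν s) (hβ : ∀ s, 0 < β s) (hD : 1 ≤ ∑ s, 1 / ν s)
    {S u : ℝ} (hS : 1 ≤ S) (hu : 0 ≤ u) :
    volume {x | S < powSum β ν x ∧ powSum β ν x < S + u} ≤
      ENNReal.ofReal (volume.real {x | powSum β ν x ≤ 1} * (∑ s, 1 / ν s) *
        S ^ (∑ s, 1 / ν s - 1) * (1 + u) ^ ∑ s, 1 / ν s) := by
  set D := ∑ s, 1 / ν s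
  set V := volume.real {x | powSum β ν x ≤ 1}
  have : 0 ≤ V := measureReal_nonneg
  have hvol (t : ℝ) (ht : 0 < t) : volume {x | powSum β ν x ≤ t} = ENNReal.ofReal (t ^ D * V) := by
    rw [volume_powSum_le_eq (fun s ↦ (hν s).ne') ht, ENNReal.ofReal_mul (by positivity),
      ofReal_measureReal (volume_powSum_le_ne_top hν hβ 1)]
  have hmeas : MeasurableSet {x | powSum β ν x ≤ S} :=
    measurableSet_le (continuous_powSum fun s ↦ (hν s).le).measurable measurable_const
  calc volume {x | S < powSum β ν x ∧ powSum β ν x < S + u}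
      ≤ volume ({x | powSum β ν x ≤ S + u} \ {x | powSum β ν x ≤ S}) :=
        measure_mono fun x hx ↦ ⟨hx.2.le, not_le.2 hx.1⟩
    _ = ENNReal.ofReal ((S + u) ^ D * V - S ^ D * V) := by
        rw [measure_sdiff (Set.ofPred_subset_ofPred.2 fun x hx ↦ hx.trans (by linarith))
          hmeas.nullMeasurableSet
          (volume_powSum_le_ne_top hν hβ S), hvol _ (by linarith), hvol _ (by linarith),
          ENNReal.ofReal_sub _ (by positivity)]
    _ = ENNReal.ofReal (V * ((S + u) ^ D - S ^ D)) := by ring_nf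
    _ ≤ ENNReal.ofReal (V * (D * S ^ (D - 1) * (1 + u) ^ D)) := by
        gcongr
        exact add_rpow_sub_rpow_le hS hu hD
    _ = ENNReal.ofReal (V * D * S ^ (D - 1) * (1 + u) ^ D) := by ring_nf

lemma exists_lintegral_exp_neg_powSum_le (hν : ∀ s, 0 < ν s) (hβ : ∀ s, 0 < β s)
    (hD : 1 ≤ ∑ s, 1 / ν s) :
    ∃ K ≥ 0, ∀ S ≥ 1, ∫⁻ x in {x | S < powSum β ν x}, ENNReal.ofReal (Real.exp (-powSum β ν x)) ≤
      ENNReal.ofReal (K * Real.exp (-S) * S ^ (∑ s, 1 / ν s - 1)) := by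
  set D := ∑ s, 1 / ν s
  set V := volume.real {x | powSum β ν x ≤ 1}
  have : 0 ≤ V := measureReal_nonneg
  set J := ∫ u in Set.Ioi 0, Real.exp (-u) * (1 + u) ^ D
  have hnonneg : 0 ≤ᵐ[volume.restrict (Set.Ioi 0)] fun u ↦ Real.exp (-u) * (1 + u) ^ D := by
    filter_upwards [ae_restrict_mem measurableSet_Ioi] with u hu
    have : 0 < u := hu
    positivity
  have : 0 ≤ J := integral_nonneg_of_ae hnonneg
  have hmeas : Measurable (powSum β ν) := (continuous_powSum fun s ↦ (hν s).le).measurable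
  refine ⟨V * D * J, by positivity, fun S hS ↦ ?_⟩
  have hshell (u : ℝ) (hu : 0 ≤ u) : volume {x | S < powSum β ν x ∧ powSum β ν x < S + u} ≤
      ENNReal.ofReal (V * D * S ^ (D - 1) * (1 + u) ^ D) :=
    volume_powSum_shell_le hν hβ hD hS hu
  rw [setLIntegral_exp_neg_lt hmeas]
  calc _ ≤ ENNReal.ofReal (Real.exp (-S)) * ∫⁻ u in Set.Ioi 0,
          ENNReal.ofReal (V * D * S ^ (D - 1)) *
            ENNReal.ofReal (Real.exp (-u) * (1 + u) ^ D) := by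
        gcongr ENNReal.ofReal (Real.exp (-S)) * ?_
        refine setLIntegral_mono' measurableSet_Ioi fun u hu ↦ ?_
        refine (mul_le_mul_right (hshell u (le_of_lt hu)) _).trans_eq ?_
        rw [← ENNReal.ofReal_mul (by positivity), ← ENNReal.ofReal_mul (by positivity)]
        ring_nf
    _ = ENNReal.ofReal (V * D * J * Real.exp (-S) * S ^ (D - 1)) := by
        rw [lintegral_const_mul _ (by fun_prop), ← ofReal_integral_eq_lintegral_ofReal
          (integrableOn_exp_neg_mul_one_add_rpow hD) hnonneg, ← ENNReal.ofReal_mul (by positivity),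
          ← ENNReal.ofReal_mul (by positivity)]
        congr 1
        ring

lemma abs_powSum_add_sub_le (hν : ∀ s, ν s ∈ Set.Icc 0 1) (hβ : ∀ s, 0 ≤ β s) {x : ι → ℝ}
    (hx : ‖x‖ ≤ 1) (y : ι → ℝ) : |powSum β ν (x + y) - powSum β ν y| ≤ ∑ s, β s := by
  have hle {z : ι → ℝ} (hz : ‖z‖ ≤ 1) (w : ι → ℝ) :
      powSum β ν (z + w) ≤ ∑ s, β s + powSum β ν w :=
    (powSum_add_le hν hβ z w).trans
      (add_le_add_left (powSum_le_sum_of_norm_le_one (fun s ↦ (hν s).1) hβ hz) _)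
  have hback := hle (norm_neg x ▸ hx) (x + y)
  rw [neg_add_cancel_left] at hback
  exact abs_sub_le_iff.2 ⟨by linarith [hle hx y], by linarith⟩

lemma tsum_indicator_exp_neg_powSum_le_lintegral (hν : ∀ s, ν s ∈ Set.Ioc 0 1)
    (hβ : ∀ s, 0 ≤ β s) (T : ℝ) :
    ∑' m : ι → ℤ, {m : ι → ℤ | T < powSum β ν (intVec m)}.indicator
        (fun m ↦ ENNReal.ofReal (Real.exp (-powSum β ν (intVec m)))) m ≤
      ENNReal.ofReal (Real.exp (∑ s, β s)) *
        ∫⁻ x in {x | T - ∑ s, β s < powSum β ν x}, ENNReal.ofReal (Real.exp (-powSum β ν x)) := by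
  have hmeas : Measurable (powSum β ν) := (continuous_powSum fun s ↦ (hν s).1.le).measurable
  rw [← lintegral_const_mul _ (by fun_prop),
    ← lintegral_indicator (measurableSet_lt measurable_const hmeas)]
  refine tsum_le_lintegral_of_le_on_unitCube 0 fun m x hx ↦ ?_
  have hshift := abs_le.1 <| abs_powSum_add_sub_le (fun s ↦ Set.Ioc_subset_Icc_self (hν s)) hβ
    (norm_le_one_of_mem_unitCube_zero hx) (intVec m)
  refine Set.indicator_apply_le' (fun hm ↦ ?_) fun _ ↦ zero_le
  have hm : T < powSum β ν (intVec m) := hm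
  rw [Set.indicator_of_mem (Set.mem_ofPred.2 (by linarith)), ← ENNReal.ofReal_mul (by positivity),
    ← Real.exp_add]
  exact ENNReal.ofReal_le_ofReal (Real.exp_le_exp.2 (by linarith))

lemma exists_tsum_indicator_exp_neg_powSum_le [Nonempty ι] (hν : ∀ s, ν s ∈ Set.Ioc 0 1)
    (hβ : ∀ s, 0 < β s) :
    ∃ K > 0, ∃ T₀ ≥ 1, ∀ T ≥ T₀,
      ∑' m : ι → ℤ, {m : ι → ℤ | T < powSum β ν (intVec m)}.indicator
        (fun m ↦ ENNReal.ofReal (Real.exp (-powSum β ν (intVec m)))) m ≤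
      ENNReal.ofReal (K * Real.exp (-T) * T ^ (∑ s, 1 / ν s - 1)) := by
  have hD := one_le_sum_one_div hν
  obtain ⟨K, hK, hKS⟩ := exists_lintegral_exp_neg_powSum_le (fun s ↦ (hν s).1) hβ hD
  set D := ∑ s, 1 / ν s
  set B := ∑ s, β s
  have hB : 0 ≤ B := Finset.sum_nonneg fun s _ ↦ (hβ s).le
  refine ⟨K * Real.exp (2 * B) + 1, by positivity, 1 + B, by linarith, fun T hT ↦ ?_⟩
  have hT1 : 1 ≤ T - B := by linarith
  calc _ ≤ ENNReal.ofReal (Real.exp B) *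
        ∫⁻ x in {x | T - B < powSum β ν x}, ENNReal.ofReal (Real.exp (-powSum β ν x)) :=
        tsum_indicator_exp_neg_powSum_le_lintegral hν (fun s ↦ (hβ s).le) T
    _ ≤ ENNReal.ofReal (Real.exp B) *
        ENNReal.ofReal (K * Real.exp (-(T - B)) * (T - B) ^ (D - 1)) := by
        gcongr
        exact hKS _ hT1
    _ = ENNReal.ofReal (K * Real.exp (2 * B) * Real.exp (-T) * (T - B) ^ (D - 1)) := by
        rw [← ENNReal.ofReal_mul (by positivity)]
        have hexp : Real.exp (-(T - B)) = Real.exp B * Real.exp (-T) := by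
          rw [← Real.exp_add]
          ring_nf
        rw [hexp, two_mul, Real.exp_add]
        ring_nf
    _ ≤ ENNReal.ofReal ((K * Real.exp (2 * B) + 1) * Real.exp (-T) * T ^ (D - 1)) := by
        gcongr
        · linarith
        · linarith

lemma summable_and_tsum_le_of_tsum_ofReal_le {α : Type*} {w : α → ℝ} {M : ℝ} (hw : ∀ a, 0 ≤ w a)
    (hM : 0 ≤ M) (h : ∑' a, ENNReal.ofReal (w a) ≤ ENNReal.ofReal M) :
    Summable w ∧ ∑' a, w a ≤ M := by
  have hws : Summable w :=
    (ENNReal.summable_toReal (ne_top_of_le_ne_top ENNReal.ofReal_ne_top h)).congr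
      fun a ↦ ENNReal.toReal_ofReal (hw a)
  refine ⟨hws, ?_⟩
  rwa [← ENNReal.ofReal_tsum_of_nonneg hw hws, ENNReal.ofReal_le_ofReal_iff hM] at h

lemma exists_summable_tsum_indicator_exp_neg_powSum_le [Nonempty ι]
    (hν : ∀ s, ν s ∈ Set.Ioc 0 1) (hβ : ∀ s, 0 < β s) :
    ∃ K > 0, ∃ T₀ ≥ 1, ∀ T ≥ T₀,
      Summable ({m : ι → ℤ | T < powSum β ν (intVec m)}.indicator
        fun m ↦ Real.exp (-powSum β ν (intVec m))) ∧
      ∑' m, {m : ι → ℤ | T < powSum β ν (intVec m)}.indicator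
        (fun m ↦ Real.exp (-powSum β ν (intVec m))) m ≤
      K * Real.exp (-T) * T ^ (∑ s, 1 / ν s - 1) := by
  obtain ⟨K, hK, T₀, hT₀, htail⟩ := exists_tsum_indicator_exp_neg_powSum_le hν hβ
  refine ⟨K, hK, T₀, hT₀, fun T hT ↦ ?_⟩
  have : 0 < T := by linarith
  refine summable_and_tsum_le_of_tsum_ofReal_le
    (fun m ↦ Set.indicator_nonneg (fun _ _ ↦ (Real.exp_pos _).le) m) (by positivity) ?_
  exact (tsum_congr fun m ↦
    (congrFun (Set.indicator_comp_of_zero ENNReal.ofReal_zero) m).symm).trans_le (htail T hT)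

lemma summable_exp_neg_powSum_intVec [Nonempty ι] (hν : ∀ s, ν s ∈ Set.Ioc 0 1)
    (hβ : ∀ s, 0 < β s) : Summable fun m : ι → ℤ ↦ Real.exp (-powSum β ν (intVec m)) := by
  obtain ⟨_, _, T₀, _, htail⟩ := exists_summable_tsum_indicator_exp_neg_powSum_le hν hβ
  have hcompl : {m : ι → ℤ | powSum β ν (intVec m) ≤ T₀}ᶜ =
      {m | T₀ < powSum β ν (intVec m)} := by
    ext
    simp
  refine ((finite_setOf_powSum_intVec_le (fun s ↦ (hν s).1) hβ T₀).summable_compl_iff).1 ?_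
  rw [hcompl]
  exact summable_subtype_iff_indicator.2 (htail T₀ le_rfl).1

end PowSum

section Interpolation

lemma inv_toReal_eq_one_sub_inv_toReal (p q : ℝ≥0∞) [ENNReal.HolderConjugate p q] :
    q.toReal⁻¹ = 1 - p.toReal⁻¹ := by
  have h := congrArg ENNReal.toReal (ENNReal.HolderConjugate.inv_add_inv_eq_one p q)
  rw [ENNReal.toReal_add (ENNReal.inv_ne_top.2 (ENNReal.HolderConjugate.ne_zero p q))
    (ENNReal.inv_ne_top.2 (ENNReal.HolderConjugate.ne_zero q p)), ENNReal.toReal_inv,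
    ENNReal.toReal_inv, ENNReal.toReal_one] at h
  linarith

lemma eLpNorm_le_eLpNorm_top_rpow_mul_eLpNorm_rpow {α E : Type*} [MeasurableSpace α]
    {μ : Measure α} [NormedAddCommGroup E] {f : α → E} (hf : AEStronglyMeasurable f μ)
    {p q : ℝ≥0∞} (hp : p ≠ 0) (hpq : p ≤ q) :
    eLpNorm f q μ ≤ eLpNorm f ∞ μ ^ (1 - p.toReal / q.toReal) *
      eLpNorm f p μ ^ (p.toReal / q.toReal) := by
  obtain rfl | hq := eq_or_ne q ∞
  · simp
  have hpt : p ≠ ∞ := ne_top_of_le_ne_top hq hpq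
  have hp_pos : 0 < p.toReal := ENNReal.toReal_pos hp hpt
  have hpq_real : p.toReal ≤ q.toReal := ENNReal.toReal_mono hq hpq
  have hq_pos : 0 < q.toReal := hp_pos.trans_le hpq_real
  set N := eLpNorm f ∞ μ
  have hpoint : ∀ᵐ x ∂μ, ‖f x‖ₑ ^ q.toReal ≤ N ^ (q.toReal - p.toReal) * ‖f x‖ₑ ^ p.toReal := by
    filter_upwards [ae_le_eLpNormEssSup (f := f) (μ := μ)] with x hx
    rw [← eLpNorm_exponent_top] at hx
    nth_rw 1 [← sub_add_cancel q.toReal p.toReal]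
    rw [ENNReal.rpow_add_of_nonneg _ _ (by linarith) hp_pos.le]
    gcongr
  rw [eLpNorm_eq_lintegral_rpow_enorm_toReal (hp.bot_lt.trans_le hpq).ne' hq,
    eLpNorm_eq_lintegral_rpow_enorm_toReal hp hpt]
  calc (∫⁻ x, ‖f x‖ₑ ^ q.toReal ∂μ) ^ (1 / q.toReal)
      ≤ (N ^ (q.toReal - p.toReal) * ∫⁻ x, ‖f x‖ₑ ^ p.toReal ∂μ) ^ (1 / q.toReal) := by
        rw [← lintegral_const_mul'' _ (hf.enorm.pow_const _)]
        gcongr ?_ ^ _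
        exact lintegral_mono_ae hpoint
    _ = _ := by
        rw [ENNReal.mul_rpow_of_nonneg _ _ (by positivity), ← ENNReal.rpow_mul, ← ENNReal.rpow_mul]
        congr 2 <;> field_simp

end Interpolation

section TailSeries

variable [Fintype ι] {c : (ι → ℤ) → ℂ} {P : ℝ}

lemma norm_tsum_latticeChar_le (hc : Summable c) (x : ι → ℝ) :
    ‖∑' m, c m * latticeChar m x‖ ≤ ∑' m, ‖c m‖ :=
  tsum_of_norm_bounded hc.norm.hasSum fun m ↦ by rw [norm_mul, norm_latticeChar, mul_one]

lemma eLpNorm_two_tsum_latticeChar (hP : 0 < P) (hc : Summable c) :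
    eLpNorm (fun x ↦ ∑' m, c m * latticeChar m (P⁻¹ • x)) 2 (volume.restrict (centeredCube P)) =
      ENNReal.ofReal (P ^ Fintype.card ι * ∑' m, ‖c m‖ ^ 2) ^ (2⁻¹ : ℝ) := by
  have : IsFiniteMeasure (volume.restrict (centeredCube (ι := ι) P)) :=
    isFiniteMeasure_restrict.2 (by simp [volume_centeredCube hP.le])
  have hmem : MemLp (fun x ↦ ∑' m, c m * latticeChar m (P⁻¹ • x)) 2
      (volume.restrict (centeredCube P)) :=
    .of_bound ((continuous_tsum_latticeChar hc).comp
      (continuous_const_smul P⁻¹)).aestronglyMeasurable _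
      (.of_forall fun x ↦ norm_tsum_latticeChar_le hc (P⁻¹ • x))
  rw [hmem.eLpNorm_eq_integral_rpow_norm two_ne_zero ENNReal.ofNat_ne_top]
  simp only [ENNReal.toReal_ofNat, Real.rpow_ofNat]
  rw [integral_centeredCube_norm_sq_tsum_latticeChar hP hc,
    ENNReal.ofReal_rpow_of_nonneg (by positivity) (by positivity)]

lemma eLpNorm_tsum_latticeChar_le (hP : 0 < P) (hc : Summable c) {b : ℝ} (hb : ∀ m, ‖c m‖ ≤ b)
    {q : ℝ≥0∞} (hq : 2 ≤ q) :
    eLpNorm (fun x ↦ ∑' m, c m * latticeChar m (P⁻¹ • x)) q (volume.restrict (centeredCube P)) ≤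
      ENNReal.ofReal ((∑' m, ‖c m‖) ^ (1 - q.toReal⁻¹) *
        (P ^ Fintype.card ι * b) ^ q.toReal⁻¹) := by
  have hb0 : 0 ≤ b := (norm_nonneg _).trans (hb 0)
  set L := ∑' m, ‖c m‖
  have hL : 0 ≤ L := tsum_nonneg fun m ↦ norm_nonneg _
  have h_sq (m : ι → ℤ) : ‖c m‖ ^ 2 ≤ b * ‖c m‖ := by
    rw [sq]
    gcongr
    exact hb m
  have h_tsum_sq : ∑' m, ‖c m‖ ^ 2 ≤ b * L := by
    rw [← tsum_mul_left]
    have := hc.norm.mul_left b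
    exact Summable.tsum_le_tsum h_sq (.of_nonneg_of_le (fun m ↦ sq_nonneg _) h_sq this) this
  have hq_exp : 0 ≤ 1 - 2 / q.toReal := by
    obtain rfl | hqt := eq_or_ne q ∞
    · simp
    · have : 2 ≤ q.toReal := ENNReal.toReal_mono hqt hq
      rw [sub_nonneg, div_le_one (by linarith)]
      exact this
  have hmeas : Continuous fun x ↦ ∑' m, c m * latticeChar m (P⁻¹ • x) :=
    (continuous_tsum_latticeChar hc).comp (continuous_const_smul P⁻¹)
  calc _ ≤ _ := eLpNorm_le_eLpNorm_top_rpow_mul_eLpNorm_rpow hmeas.aestronglyMeasurable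
        two_ne_zero hq
    _ ≤ ENNReal.ofReal L ^ (1 - 2 / q.toReal) *
        (ENNReal.ofReal (P ^ Fintype.card ι * (b * L)) ^ (2⁻¹ : ℝ)) ^ (2 / q.toReal) := by
        rw [eLpNorm_two_tsum_latticeChar hP hc, eLpNorm_exponent_top, ENNReal.toReal_ofNat]
        gcongr
        exact eLpNormEssSup_le_of_ae_bound (.of_forall fun x ↦ norm_tsum_latticeChar_le hc _)
    _ = ENNReal.ofReal (L ^ (1 - 2 / q.toReal) * (P ^ Fintype.card ι * b * L) ^ q.toReal⁻¹) := by
        rw [← ENNReal.rpow_mul, ENNReal.ofReal_rpow_of_nonneg hL hq_exp,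
          ENNReal.ofReal_rpow_of_nonneg (by positivity) (by positivity),
          ← ENNReal.ofReal_mul (by positivity)]
        congr 3
        · ring
        · ring
    _ = ENNReal.ofReal (L ^ (1 - q.toReal⁻¹) * (P ^ Fintype.card ι * b) ^ q.toReal⁻¹) := by
        rw [Real.mul_rpow (by positivity) hL, mul_comm (_ ^ _) (L ^ _), ← mul_assoc,
          ← Real.rpow_add_of_nonneg hL hq_exp (by positivity)]
        congr 3
        ring

end TailSeries

section Truncation

variable [Fintype ι] {P : ℝ}

lemma latticeChar_inv_smul_eq_exp (m : ι → ℤ) (P : ℝ) (x : ι → ℝ) :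
    latticeChar m (P⁻¹ • x) = cexp (2 * Real.pi * I * ((∑ k, m k * x k) / P : ℝ)) := by
  rw [latticeChar_eq_exp, Finset.sum_div]
  simp only [Pi.smul_apply, smul_eq_mul, mul_left_comm, div_eq_inv_mul]

lemma latticeChar_neg_inv_smul_eq_exp (m : ι → ℤ) (P : ℝ) (x : ι → ℝ) :
    latticeChar (-m) (P⁻¹ • x) = cexp (I * (∑ k, -2 * Real.pi * m k / P * x k : ℝ)) := by
  rw [latticeChar_inv_smul_eq_exp, Finset.sum_div]
  push_cast
  simp only [Finset.mul_sum, Pi.neg_apply]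
  congr 1
  refine Finset.sum_congr rfl fun k _ ↦ ?_
  push_cast
  ring

lemma tsum_ne_zero_translates_smul_eq {f : C(ι → ℝ, ℂ)} {A r : ℝ} (hA : 0 ≤ A)
    (hr : Fintype.card ι < r) (hf : ∀ x, ‖f x‖ ≤ A * (1 + ‖x‖) ^ (-r)) (hP : 0 < P)
    {c : (ι → ℤ) → ℂ} (hc : Summable c)
    (hcf : ∀ m, c m = (P ^ Fintype.card ι)⁻¹ * ∫ y, latticeChar (-m) (P⁻¹ • y) * f y)
    (x : ι → ℝ) :
    ∑' m : {m : ι → ℤ // m ≠ 0}, f (x + P • intVec (m : ι → ℤ)) =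
      ∑' m, c m * latticeChar m (P⁻¹ • x) - f x := by
  obtain ⟨hsum, hpoisson⟩ := tsum_translates_smul_eq_tsum_latticeChar hA hr hf hP hc hcf x
  have hsplit := hsum.tsum_subtype_add_tsum_subtype_compl {0}
  rw [tsum_singleton 0 fun m ↦ f (x + P • intVec m), map_zero, smul_zero, add_zero, hpoisson]
    at hsplit
  exact eq_sub_of_add_eq' hsplit

lemma tsum_latticeChar_sub_tsum_subtype {c : (ι → ℤ) → ℂ} (hc : Summable c) (U : Set (ι → ℤ))
    (x : ι → ℝ) :
    ∑' m, c m * latticeChar m x - ∑' m : U, c m * latticeChar (m : ι → ℤ) x =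
      ∑' m, Uᶜ.indicator c m * latticeChar m x := by
  have hsum : Summable fun m ↦ c m * latticeChar m x :=
    .of_norm (by simpa only [norm_mul, norm_latticeChar, mul_one] using hc.norm)
  rw [← hsum.tsum_subtype_add_tsum_subtype_compl U, add_sub_cancel_left,
    tsum_subtype Uᶜ fun m ↦ c m * latticeChar m x]
  simp only [Set.indicator_mul_left]

lemma eLpNorm_restrict_centeredCube_le (hP : 0 ≤ P) {f : (ι → ℝ) → ℂ} {ε : ℝ}
    (hf : ∀ x ∈ centeredCube P, ‖f x‖ ≤ ε) (q : ℝ≥0∞) :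
    eLpNorm f q (volume.restrict (centeredCube P)) ≤
      ENNReal.ofReal (ε * P ^ (Fintype.card ι / q.toReal)) := by
  refine (eLpNorm_le_of_ae_bound
    ((ae_restrict_iff' (measurableSet_centeredCube P)).2 (.of_forall hf))).trans_eq ?_
  rw [Measure.restrict_apply_univ, volume_centeredCube hP, ENNReal.ofReal_rpow_of_nonneg
    (by positivity) (by positivity), ← ENNReal.ofReal_mul (by positivity), mul_comm,
    ← Real.rpow_natCast, ← Real.rpow_mul hP, div_eq_mul_inv]

lemma exists_summable_tsum_norm_indicator_le [Nonempty ι] {c : (ι → ℤ) → ℂ} {a : ℝ} (ha : 0 ≤ a)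
    {β ν : ι → ℝ} (hν : ∀ s, ν s ∈ Set.Ioc 0 1) (hβ : ∀ s, 0 < β s)
    (hc : ∀ m, ‖c m‖ ≤ a * Real.exp (-powSum β ν (intVec m))) :
    ∃ K > 0, ∃ T₀ ≥ 1, ∀ T ≥ T₀,
      Summable (fun m ↦ ‖{m | T < powSum β ν (intVec m)}.indicator c m‖) ∧
      ∑' m, ‖{m | T < powSum β ν (intVec m)}.indicator c m‖ ≤
        a * K * (Real.exp (-T) * T ^ (∑ s, 1 / ν s - 1)) := by
  obtain ⟨K, hK, T₀, hT₀, htail⟩ := exists_summable_tsum_indicator_exp_neg_powSum_le hν hβ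
  refine ⟨K, hK, T₀, hT₀, fun T hT ↦ ?_⟩
  obtain ⟨hsum, hle⟩ := htail T hT
  set U := {m : ι → ℤ | T < powSum β ν (intVec m)}
  have hcU (m : ι → ℤ) :
      ‖U.indicator c m‖ ≤ a * U.indicator (fun m ↦ Real.exp (-powSum β ν (intVec m))) m := by
    by_cases hm : m ∈ U <;> simp [hm, hc]
  have hcU_sum : Summable fun m ↦ ‖U.indicator c m‖ :=
    .of_nonneg_of_le (fun _ ↦ norm_nonneg _) hcU (hsum.mul_left a)
  refine ⟨hcU_sum, (hcU_sum.tsum_le_tsum hcU (hsum.mul_left a)).trans ?_⟩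
  rw [tsum_mul_left, mul_assoc a, ← mul_assoc K]
  gcongr

lemma norm_indicator_le_mul_exp_neg {c : (ι → ℤ) → ℂ} {a : ℝ} (ha : 0 ≤ a) {β ν : ι → ℝ}
    (hc : ∀ m, ‖c m‖ ≤ a * Real.exp (-powSum β ν (intVec m))) (T : ℝ) (m : ι → ℤ) :
    ‖{m | T < powSum β ν (intVec m)}.indicator c m‖ ≤ a * Real.exp (-T) := by
  rw [norm_indicator_eq_indicator_norm]
  refine Set.indicator_apply_le' (fun hm ↦ (hc m).trans ?_) fun _ ↦ by positivity
  have : T < powSum β ν (intVec m) := hm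
  gcongr

lemma mul_mul_rpow_mul_mul_rpow_of_add_eq_one {x y e t d s s' : ℝ} (hx : 0 ≤ x) (hy : 0 ≤ y)
    (he : 0 < e) (ht : 0 ≤ t) (hs : s + s' = 1) :
    (x * (e * t ^ d)) ^ s * (y * e) ^ s' = x ^ s * y ^ s' * e * t ^ (d * s) := by
  rw [Real.mul_rpow hx (by positivity), Real.mul_rpow he.le (by positivity),
    Real.mul_rpow hy he.le, Real.rpow_mul ht]
  calc _ = x ^ s * y ^ s' * (e ^ s * e ^ s') * (t ^ d) ^ s := by ring
    _ = _ := by rw [← Real.rpow_add he, hs, Real.rpow_one]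

lemma exists_eLpNorm_tail_latticeChar_le [Nonempty ι] (hP : 0 < P) {c : (ι → ℤ) → ℂ} {a : ℝ}
    (ha : 0 < a) {β ν : ι → ℝ} (hν : ∀ s, ν s ∈ Set.Ioc 0 1) (hβ : ∀ s, 0 < β s)
    (hc : ∀ m, ‖c m‖ ≤ a * Real.exp (-powSum β ν (intVec m)))
    {q : ℝ≥0∞} (hq : 2 ≤ q) (q' : ℝ≥0∞) [ENNReal.HolderConjugate q q'] :
    ∃ C > 0, ∃ T₀ ≥ 1, ∀ T ≥ T₀,
      eLpNorm (fun x ↦ ∑' m, {m : ι → ℤ | T < powSum β ν (intVec m)}.indicator c m *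
          latticeChar m (P⁻¹ • x)) q (volume.restrict (centeredCube P)) ≤
        ENNReal.ofReal (C * Real.exp (-T) * T ^ ((∑ s, 1 / ν s - 1) / q'.toReal)) := by
  obtain ⟨K, hK, T₀, hT₀, htail⟩ := exists_summable_tsum_norm_indicator_le ha.le hν hβ hc
  have hconj := inv_toReal_eq_one_sub_inv_toReal q q'
  refine ⟨(a * K) ^ q'.toReal⁻¹ * (P ^ Fintype.card ι * a) ^ q.toReal⁻¹, by positivity, T₀, hT₀,
    fun T hT ↦ ?_⟩
  have hT_nonneg : 0 ≤ T := by linarith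
  obtain ⟨hsum, hle⟩ := htail T hT
  refine (eLpNorm_tsum_latticeChar_le hP hsum.of_norm
    (norm_indicator_le_mul_exp_neg ha.le hc T) hq).trans (ENNReal.ofReal_le_ofReal ?_)
  rw [← hconj, ← mul_assoc _ a, div_eq_mul_inv, ← mul_mul_rpow_mul_mul_rpow_of_add_eq_one
    (by positivity) (by positivity) (Real.exp_pos _) hT_nonneg (by rw [hconj, sub_add_cancel])]
  gcongr

lemma eLpNorm_sub_tsum_subtype_latticeChar_le {f : C(ι → ℝ, ℂ)} {A r : ℝ} (hA : 0 ≤ A)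
    (hr : Fintype.card ι < r) (hf : ∀ x, ‖f x‖ ≤ A * (1 + ‖x‖) ^ (-r)) (hP : 0 < P)
    {c : (ι → ℤ) → ℂ} (hc : Summable c)
    (hcf : ∀ m, c m = (P ^ Fintype.card ι)⁻¹ * ∫ y, latticeChar (-m) (P⁻¹ • y) * f y)
    {ε : ℝ} (hfε : ∀ x ∈ centeredCube P,
      ‖∑' m : {m : ι → ℤ // m ≠ 0}, f (x + P • intVec (m : ι → ℤ))‖ ≤ ε)
    (U : Set (ι → ℤ)) {q : ℝ≥0∞} (hq : 1 ≤ q) :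
    eLpNorm (fun x ↦ f x - ∑' m : U, c m * latticeChar (m : ι → ℤ) (P⁻¹ • x)) q
        (volume.restrict (centeredCube P)) ≤
      ENNReal.ofReal (ε * P ^ (Fintype.card ι / q.toReal)) +
        eLpNorm (fun x ↦ ∑' m, Uᶜ.indicator c m * latticeChar m (P⁻¹ • x)) q
          (volume.restrict (centeredCube P)) := by
  have halias := tsum_ne_zero_translates_smul_eq hA hr hf hP hc hcf
  simp only [halias] at hfε
  have hcont {c' : (ι → ℤ) → ℂ} (hc' : Summable c') :
      Continuous fun x ↦ ∑' m, c' m * latticeChar m (P⁻¹ • x) :=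
    (continuous_tsum_latticeChar hc').comp (continuous_const_smul P⁻¹)
  have hdecomp : (fun x ↦ f x - ∑' m : U, c m * latticeChar (m : ι → ℤ) (P⁻¹ • x)) =
      (fun x ↦ ∑' m, Uᶜ.indicator c m * latticeChar m (P⁻¹ • x)) -
        fun x ↦ ∑' m, c m * latticeChar m (P⁻¹ • x) - f x := by
    ext x
    rw [Pi.sub_apply, ← tsum_latticeChar_sub_tsum_subtype hc U]
    ring
  rw [hdecomp, add_comm]
  refine (eLpNorm_sub_le (hcont (hc.indicator _)).aestronglyMeasurable
    ((hcont hc).sub f.continuous).aestronglyMeasurable hq).trans ?_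
  gcongr
  exact eLpNorm_restrict_centeredCube_le hP.le hfε q

end Truncation

theorem density_truncated_fourier_approximation_general [Fintype ι] [Nonempty ι] {P : ℝ}
    (hP : 0 < P) {f : (ι → ℝ) → ℂ} (hfc : Continuous f) {Φ : (ι → ℝ) → ℂ}
    (hΦ : ∀ v, Φ v = ∫ x, cexp (I * (∑ k, v k * x k : ℝ)) * f x)
    {A r : ℝ} (hr : Fintype.card ι < r) (hf : ∀ x, ‖f x‖ ≤ A * (1 + ‖x‖) ^ (-r))
    {ε : ℝ} (hfε : ∀ x ∈ centeredCube P,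
      ‖∑' m : {m : ι → ℤ // m ≠ 0}, f (x + P • intVec (m : ι → ℤ))‖ ≤ ε)
    {ν β : ι → ℝ} (hν : ∀ s, ν s ∈ Set.Ioc 0 1) (hβ : ∀ s, 0 < β s)
    (hΦm : ∀ m : ι → ℤ, ‖Φ fun k ↦ -2 * Real.pi * m k / P‖ ≤ Real.exp (-powSum β ν (intVec m)))
    {q q' : ℝ≥0∞} (hq : 2 ≤ q) [ENNReal.HolderConjugate q q'] :
    ∃ C > 0, ∃ R₀ > 1, ∀ R ≥ R₀,
      eLpNorm (fun x ↦ f x - ((P ^ Fintype.card ι)⁻¹ : ℝ) *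
          ∑' m : {m : ι → ℤ // powSum β ν (intVec m) ≤ Real.log R},
            (Φ fun k ↦ -2 * Real.pi * (m : ι → ℤ) k / P) *
              latticeChar (m : ι → ℤ) (P⁻¹ • x))
        q (volume.restrict (centeredCube P)) ≤
      ENNReal.ofReal (ε * P ^ (Fintype.card ι / q.toReal) +
        C * R⁻¹ * Real.log R ^ ((∑ s, 1 / ν s - 1) / q'.toReal)) := by
  have hA : 0 ≤ A := by simpa using (norm_nonneg _).trans (hf 0)
  have hzero : (0 : ι → ℝ) ∈ centeredCube P := fun k ↦ by
    rw [Pi.zero_apply, abs_zero]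
    positivity
  have hε : 0 ≤ ε := (norm_nonneg _).trans (hfε 0 hzero)
  set c : (ι → ℤ) → ℂ := fun m ↦
    ((P ^ Fintype.card ι)⁻¹ : ℝ) * Φ fun k ↦ -2 * Real.pi * m k / P with hc_def
  have hc (m : ι → ℤ) :
      ‖c m‖ ≤ (P ^ Fintype.card ι)⁻¹ * Real.exp (-powSum β ν (intVec m)) := by
    rw [norm_mul, norm_real, Real.norm_of_nonneg (by positivity)]
    gcongr
    exact hΦm m
  have hc_sum : Summable c :=
    .of_norm_bounded ((summable_exp_neg_powSum_intVec hν hβ).mul_left _) hc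
  have hcf (m : ι → ℤ) :
      c m = (P ^ Fintype.card ι)⁻¹ * ∫ y, latticeChar (-m) (P⁻¹ • y) * f y := by
    simp [c, hΦ, latticeChar_neg_inv_smul_eq_exp]
  obtain ⟨C, hC, T₀, hT₀, htail⟩ :=
    exists_eLpNorm_tail_latticeChar_le hP (by positivity) hν hβ hc hq q'
  refine ⟨C, hC, Real.exp T₀, Real.one_lt_exp_iff.2 (by linarith), fun R hR ↦ ?_⟩
  have hR_pos : 0 < R := (Real.exp_pos _).trans_le hR
  have hlog : T₀ ≤ Real.log R := (Real.le_log_iff_exp_le hR_pos).2 hR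
  have hcompl : {m : ι → ℤ | powSum β ν (intVec m) ≤ Real.log R}ᶜ =
      {m | Real.log R < powSum β ν (intVec m)} := by
    ext
    simp
  have hbound := eLpNorm_sub_tsum_subtype_latticeChar_le (f := ⟨f, hfc⟩) hA hr hf hP hc_sum hcf
    hfε {m | powSum β ν (intVec m) ≤ Real.log R} (one_le_two.trans hq)
  rw [hcompl] at hbound
  have hlog_nonneg : 0 ≤ Real.log R := (zero_le_one.trans hT₀).trans hlog
  rw [ENNReal.ofReal_add (by positivity) (by positivity)]
  refine le_trans ?_ (hbound.trans (add_le_add_right ((htail _ hlog).trans_eq ?_) _))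
  · simp only [hc_def, mul_assoc, tsum_mul_left]
    rfl
  · rw [Real.exp_neg, Real.exp_log hR_pos]

theorem density_truncated_fourier_approximation
    (n : ℕ) (hn : 1 ≤ n) (P : ℕ) (hP : 1 ≤ P)
    (p : (Fin n → ℝ) → ℝ) (hpc : Continuous p)
    (hp0 : ∀ x, 0 ≤ p x) (hp1 : ∫ x : Fin n → ℝ, p x = 1)
    (Φ : (Fin n → ℝ) → ℂ)
    (hΦ : ∀ v : Fin n → ℝ, Φ v =
      ∫ x : Fin n → ℝ, Complex.exp (Complex.I * (∑ k, v k * x k : ℝ)) * (p x : ℂ))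
    (A δ : ℝ) (hA : 0 < A) (hδ : 0 < δ)
    (hpb : ∀ x : Fin n → ℝ,
      p x ≤ A * (1 + Real.sqrt (∑ k, x k ^ 2)) ^ (-(n : ℝ) - δ))
    (hΦb : ∀ v : Fin n → ℝ,
      ‖Φ v‖ ≤ A * (1 + Real.sqrt (∑ k, v k ^ 2)) ^ (-(n : ℝ) - δ))
    (ε : ℝ) (hε : 0 < ε)
    (hsum : ∀ x : Fin n → ℝ, (∀ k, |x k| ≤ (P : ℝ) / 2) →
      (∑' m : {m : Fin n → ℤ // m ≠ 0},
        p (fun k => x k + (P : ℝ) * ((m : Fin n → ℤ) k : ℝ))) ≤ ε)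
    (ν β : Fin n → ℝ) (hν : ∀ s, ν s ∈ Set.Ioo (0 : ℝ) 1) (hβ : ∀ s, 0 < β s)
    (hΦm : ∀ m : Fin n → ℤ,
      ‖Φ (fun k => -2 * Real.pi * (m k : ℝ) / (P : ℝ))‖
        ≤ Real.exp (-∑ s, β s * |(m s : ℝ)| ^ ν s))
    (q q' : ℝ≥0∞) (hq : 2 ≤ q) (hqq' : 1 / q + 1 / q' = 1) :
    ∃ C > (0 : ℝ), ∃ R₀ > (1 : ℝ), ∀ R ≥ R₀,
      eLpNorm
        (fun x : Fin n → ℝ =>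
          (p x : ℂ) -
            (((P : ℝ) ^ n)⁻¹ : ℝ) *
              ∑' m : {m : Fin n → ℤ // ∑ s, β s * |(m s : ℝ)| ^ ν s ≤ Real.log R},
                Φ (fun k => -2 * Real.pi * ((m : Fin n → ℤ) k : ℝ) / (P : ℝ)) *
                  Complex.exp (2 * Real.pi * Complex.I *
                    ((∑ k, ((m : Fin n → ℤ) k : ℝ) * x k) / (P : ℝ) : ℝ)))
        q (volume.restrict {x : Fin n → ℝ | ∀ k, |x k| ≤ (P : ℝ) / 2})
      ≤ ENNReal.ofReal
          (ε * (P : ℝ) ^ ((n : ℝ) / q.toReal)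
            + C * R⁻¹ * Real.log R ^ ((∑ s, 1 / ν s - 1) / q'.toReal)) := by
  have : Nonempty (Fin n) := ⟨⟨0, hn⟩⟩
  have : ENNReal.HolderConjugate q q' := ENNReal.holderConjugate_iff.2 (by simpa using hqq')
  have hp (x : Fin n → ℝ) : ‖(p x : ℂ)‖ ≤ A * (1 + ‖x‖) ^ (-(n + δ)) := by
    rw [norm_real, Real.norm_of_nonneg (hp0 x)]
    refine (hpb x).trans (mul_le_mul_of_nonneg_left ?_ hA.le)
    rw [← neg_add']
    exact one_add_sqrt_sum_sq_rpow_neg_le (by positivity) x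
  have hpε (x : Fin n → ℝ) (hx : x ∈ centeredCube P) :
      ‖∑' m : {m : Fin n → ℤ // m ≠ 0}, (p (x + (P : ℝ) • intVec (m : Fin n → ℤ)) : ℂ)‖ ≤ ε := by
    rw [← ofReal_tsum, norm_real, Real.norm_of_nonneg (tsum_nonneg fun _ ↦ hp0 _)]
    exact hsum x hx
  have := density_truncated_fourier_approximation_general (Nat.cast_pos.2 hP)
    (continuous_ofReal.comp hpc) hΦ (by simpa) hp hpε
    (fun s ↦ Set.Ioo_subset_Ioc_self (hν s)) hβ hΦm hq (q' := q')
  simp only [latticeChar_inv_smul_eq_exp, Fintype.card_fin] at this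
  exact this
end

section
/- Let n ≥ 2 and let ε = (ε₁, …, εₙ) ∈ ℝⁿ satisfy ε_m > 0 for 2 ≤ m ≤ n and ε₁ < −1 − Σ_{m=2}^n ε_m. Then the function y ↦ max( e^{y₁} − Σ_{j=2}^n e^{y_j} − 1, 0 ) · e^{⟨y,ε⟩} is Lebesgue integrable on ℝⁿ. -/
open MeasureTheory

/-!
The payoff vanishes unless `y i₀` is positive and is the largest coordinate of `y`, and there it is
at most `exp (y i₀)`. So it suffices to integrate `exp ⟨y, a⟩` over the cone of such `y`, where
`a = ε + e_{i₀}` satisfies `∑ k, a k < 0` and `a k > 0` for `k ≠ i₀`. Both terms of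
`⟨y, a⟩ = y i₀ * ∑ k, a k - ∑ k, a k * (y i₀ - y k)` are nonpositive on the cone, and as
`|y k| ≤ y i₀ + (y i₀ - y k)` they give `⟨y, a⟩ ≤ -c * ∑ k, |y k|` for some `c > 0`. The bound
`exp (-c * ∑ k, |y k|)` is a product of integrable functions of one variable.
-/

section PeakCone

variable {ι : Type*} {i₀ : ι}

/-- The cone of vectors whose coordinate `i₀` is nonnegative and maximal; it contains the region
where the payoff does not vanish. -/
def peakCone (i₀ : ι) : Set (ι → ℝ) :=
  {y | 0 ≤ y i₀ ∧ ∀ j, y j ≤ y i₀}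

lemma isClosed_peakCone (i₀ : ι) : IsClosed (peakCone i₀) := by
  simp only [peakCone, Set.ofPred_and, Set.ofPred_forall]
  exact (isClosed_le continuous_const (continuous_apply i₀)).inter
    (isClosed_iInter fun j => isClosed_le (continuous_apply j) (continuous_apply i₀))

variable [Fintype ι] {a : ι → ℝ}

lemma sum_mul_le_neg_mul_sum_abs {c : ℝ} (hc : 0 ≤ c)
    (hc_card : c * Fintype.card ι ≤ -∑ k, a k) (hc_le : ∀ k, k ≠ i₀ → c ≤ a k)
    {y : ι → ℝ} (hy : y ∈ peakCone i₀) :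
    ∑ k, y k * a k ≤ -c * ∑ k, |y k| := by
  obtain ⟨hy_nonneg, hy_max⟩ := hy
  have habs (k : ι) : |y k| ≤ y i₀ + (y i₀ - y k) := by
    rw [abs_le]
    constructor <;> linarith [hy_max k]
  have hgap (k : ι) : c * (y i₀ - y k) ≤ a k * (y i₀ - y k) := by
    rcases eq_or_ne k i₀ with rfl | hk
    · simp
    · exact mul_le_mul_of_nonneg_right (hc_le k hk) (sub_nonneg.2 (hy_max k))
  calc ∑ k, y k * a k
      = y i₀ * ∑ k, a k - ∑ k, a k * (y i₀ - y k) := by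
        rw [Finset.mul_sum, ← Finset.sum_sub_distrib]
        exact Finset.sum_congr rfl fun k _ => by ring
    _ ≤ y i₀ * -(c * Fintype.card ι) - ∑ k, c * (y i₀ - y k) := by
        gcongr ?_ * ?_ - ∑ k, ?_ with k
        · exact le_neg_of_le_neg hc_card
        · exact hgap k
    _ = -c * ∑ k, (y i₀ + (y i₀ - y k)) := by
        rw [Finset.sum_add_distrib, Finset.sum_const, nsmul_eq_mul, Finset.card_univ,
          ← Finset.mul_sum]
        ring
    _ ≤ -c * ∑ k, |y k| :=
        mul_le_mul_of_nonpos_left (Finset.sum_le_sum fun k _ => habs k) (neg_nonpos.2 hc)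

lemma exists_pos_mul_card_le_and_le (ha : ∀ k, k ≠ i₀ → 0 < a k) {s : ℝ} (hs : 0 < s) :
    ∃ c, 0 < c ∧ c * Fintype.card ι ≤ s ∧ ∀ k, k ≠ i₀ → c ≤ a k := by
  classical
  have hcard : (0 : ℝ) < Fintype.card ι := by exact_mod_cast Fintype.card_pos_iff.2 ⟨i₀⟩
  have hpos : ∀ k, 0 < Function.update a i₀ (s / Fintype.card ι) k :=
    (Function.forall_update_iff a (p := fun _ x => 0 < x)).2 ⟨div_pos hs hcard, ha⟩
  obtain ⟨c, hc, hc_lt⟩ := Pi.exists_forall_pos_add_lt hpos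
  simp only [zero_add] at hc_lt
  refine ⟨c, hc, (le_div_iff₀ hcard).1 ?_, fun k hk => ?_⟩
  · simpa using (hc_lt i₀).le
  · simpa [hk] using (hc_lt k).le

lemma integrable_exp_neg_mul_abs {c : ℝ} (hc : 0 < c) :
    Integrable (fun x : ℝ => Real.exp (-c * |x|)) := by
  refine Integrable.of_integral_ne_zero ?_
  rw [integral_comp_abs (f := fun x => Real.exp (-c * x)),
    integral_exp_mul_Ioi (neg_lt_zero.2 hc) 0]
  simp [hc.ne']

lemma integrable_exp_neg_mul_sum_abs {c : ℝ} (hc : 0 < c) :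
    Integrable (fun y : ι → ℝ => Real.exp (-c * ∑ k, |y k|)) := by
  simp only [Finset.mul_sum, Real.exp_sum]
  exact Integrable.fintype_prod fun _ => integrable_exp_neg_mul_abs hc

lemma integrableOn_exp_sum_mul_peakCone (ha : ∀ k, k ≠ i₀ → 0 < a k) (ha_sum : ∑ k, a k < 0) :
    IntegrableOn (fun y : ι → ℝ => Real.exp (∑ k, y k * a k)) (peakCone i₀) := by
  obtain ⟨c, hc, hc_card, hc_le⟩ := exists_pos_mul_card_le_and_le ha (neg_pos.2 ha_sum)
  refine (integrable_exp_neg_mul_sum_abs hc).integrableOn.mono'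
    (Continuous.aestronglyMeasurable (by fun_prop))
    (ae_restrict_of_forall_mem (isClosed_peakCone i₀).measurableSet fun y hy => ?_)
  rw [Real.norm_of_nonneg (Real.exp_nonneg _), Real.exp_le_exp]
  exact sum_mul_le_neg_mul_sum_abs hc.le hc_card hc_le hy

variable [DecidableEq ι]

lemma mem_peakCone_of_one_add_sum_exp_le {y : ι → ℝ}
    (hy : 1 + ∑ j ∈ {i₀}ᶜ, Real.exp (y j) ≤ Real.exp (y i₀)) : y ∈ peakCone i₀ := by
  constructor
  · rw [← Real.one_le_exp_iff]
    linarith [Finset.sum_nonneg fun j (_ : j ∈ ({i₀}ᶜ : Finset ι)) => Real.exp_nonneg (y j)]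
  · intro j
    rcases eq_or_ne j i₀ with rfl | hj
    · exact le_rfl
    · rw [← Real.exp_le_exp]
      have hle : Real.exp (y j) ≤ ∑ j ∈ {i₀}ᶜ, Real.exp (y j) :=
        Finset.single_le_sum (f := fun j => Real.exp (y j)) (fun _ _ => Real.exp_nonneg _)
          (by simpa using hj)
      linarith

lemma max_exp_sub_sum_exp_sub_one_le_indicator (y : ι → ℝ) :
    max (Real.exp (y i₀) - (∑ j ∈ {i₀}ᶜ, Real.exp (y j)) - 1) 0 ≤
      (peakCone i₀).indicator (fun y => Real.exp (y i₀)) y := by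
  refine max_le ?_ (Set.indicator_nonneg (fun _ _ => Real.exp_nonneg _) y)
  by_cases hy : y ∈ peakCone i₀
  · rw [Set.indicator_of_mem hy]
    linarith [Finset.sum_nonneg fun j (_ : j ∈ ({i₀}ᶜ : Finset ι)) => Real.exp_nonneg (y j)]
  · rw [Set.indicator_of_notMem hy]
    linarith [not_le.1 (mt mem_peakCone_of_one_add_sum_exp_le hy)]

theorem payoff_times_exp_integrable_general {ε : ι → ℝ} (hε : ∀ m, m ≠ i₀ → 0 < ε m)
    (hε_sum : ∑ m, ε m < -1) :
    Integrable (fun y : ι → ℝ =>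
      max (Real.exp (y i₀) - (∑ j ∈ {i₀}ᶜ, Real.exp (y j)) - 1) 0 *
        Real.exp (∑ k, y k * ε k)) := by
  have hcone : IntegrableOn
      (fun y : ι → ℝ => Real.exp (∑ k, y k * (ε + Pi.single i₀ 1 : ι → ℝ) k)) (peakCone i₀) := by
    refine integrableOn_exp_sum_mul_peakCone (fun k hk => ?_) ?_
    · simpa [hk] using hε k hk
    · simp only [Pi.add_apply, Finset.sum_add_distrib, Fintype.sum_pi_single']
      linarith
  have hexp (y : ι → ℝ) : Real.exp (∑ k, y k * (ε + Pi.single i₀ 1 : ι → ℝ) k) =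
      Real.exp (y i₀) * Real.exp (∑ k, y k * ε k) := by
    simp [mul_add, Finset.sum_add_distrib, Pi.single_apply, Real.exp_add, mul_comm]
  simp only [hexp] at hcone
  refine (hcone.integrable_indicator (isClosed_peakCone i₀).measurableSet).mono'
    (Continuous.aestronglyMeasurable (by fun_prop)) (.of_forall fun y => ?_)
  rw [Real.norm_of_nonneg (by positivity), Set.indicator_mul_left]
  gcongr
  exact max_exp_sub_sum_exp_sub_one_le_indicator y

end PeakCone

theorem payoff_times_exp_integrable
    (n : ℕ) (hn : 2 ≤ n) (i₀ : Fin n) (hi₀ : (i₀ : ℕ) = 0)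
    (ε : Fin n → ℝ) (hε : ∀ m, m ≠ i₀ → 0 < ε m)
    (hε1 : ε i₀ < -1 - ∑ m ∈ Finset.Ioi i₀, ε m) :
    Integrable (fun y : Fin n → ℝ =>
      max (Real.exp (y i₀) - (∑ j ∈ Finset.Ioi i₀, Real.exp (y j)) - 1) 0 *
        Real.exp (∑ k, y k * ε k)) := by
  have hIoi : Finset.Ioi i₀ = {i₀}ᶜ := by
    ext m
    simp only [Finset.mem_Ioi, Finset.mem_compl, Finset.mem_singleton, Fin.lt_def, Fin.ext_iff]
    omega
  rw [hIoi] at hε1 ⊢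
  exact payoff_times_exp_integrable_general hε
    (by rw [Fintype.sum_eq_add_sum_compl i₀]; linarith)
end

section
/- Let n ≥ 2 and let ε = (ε₁, …, εₙ) ∈ ℝⁿ satisfy ε_m > 0 for 2 ≤ m ≤ n and ε₁ < −1 − Σ_{m=2}^n ε_m. For z ∈ ℂⁿ define FS(z) = Γ( i(z₁ + Σ_{m=2}^n z_m) − 1 ) · ( ∏_{m=2}^n Γ(−i z_m) ) / Γ(i z₁ + 1), where Γ is the complex Gamma function. Then for every u ∈ ℝⁿ, ∫_{ℝⁿ} max( e^{y₁} − Σ_{m=2}^n e^{y_m} − 1, 0 ) · e^{⟨y,ε⟩} · e^{−i⟨u,y⟩} dy = FS(u + iε), where u + iε ∈ ℂⁿ has components u_k + i ε_k. -/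
open MeasureTheory Complex

/-!
Write `S = 1 + ∑ exp y_m`. Shifting `y₁` by `log S` turns the payoff into `S * max (exp y₁ - 1) 0`,
so the transform factors into that of a vanilla call and a Dirichlet integral
`∫ exp ⟨a, y⟩ * S ^ (-s)`. The Dirichlet integral is evaluated by a second pair of shifts: in the
double integral of `exp (s * τ + ⟨a, y⟩ - exp τ * S)`, absorbing `log S` into `τ` produces `Γ(s)`
times the Dirichlet integral, whereas absorbing `τ` into every `y_m` produces a product of
independent Gamma integrals. Shifts preserve the product measure, and the integral of a product of
functions of separate variables factors unconditionally, so no integrability on the product space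
has to be checked.
-/

section Shear

variable {X Y : Type*} [MeasurableSpace X] [MeasurableSpace Y] [AddGroup X] [MeasurableAdd₂ X]
  [MeasurableNeg X]

/-- The shear `(y, x) ↦ (y, x + g y)`, as a measurable equivalence: integrals can be transported
along it without measurability or integrability of the integrand. -/
def addShear (g : Y → X) (hg : Measurable g) : Y × X ≃ᵐ Y × X where
  toEquiv := .prodShear (.refl Y) fun y => .addRight (g y)
  measurable_toFun := by
    change Measurable fun p : Y × X => (p.1, p.2 + g p.1)
    fun_prop
  measurable_invFun := by
    change Measurable fun p : Y × X => (p.1, p.2 + -g p.1)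
    fun_prop

variable (ν : Measure Y) (μ : Measure X) [SFinite ν] [SFinite μ] [μ.IsAddRightInvariant]

lemma measurePreserving_addShear (g : Y → X) (hg : Measurable g) :
    MeasurePreserving (addShear g hg) (ν.prod μ) (ν.prod μ) :=
  (MeasurePreserving.id ν).skew_product (g := fun y x => x + g y)
    (measurable_snd.add (hg.comp measurable_fst))
    (.of_forall fun y => map_add_right_eq_self μ (g y))

lemma integral_mul_comp_add {𝕜 : Type*} [RCLike 𝕜]
    (q : Y → 𝕜) (f : X → 𝕜) {g : Y → X} (hg : Measurable g) :
    ∫ p : Y × X, q p.1 * f (p.2 + g p.1) ∂ν.prod μ = (∫ y, q y ∂ν) * ∫ x, f x ∂μ :=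
  ((measurePreserving_addShear ν μ g hg).integral_comp' fun p => q p.1 * f p.2).trans
    (integral_prod_mul q f)

end Shear

section GammaKernel

lemma mellin_eq_integral_cexp_smul {E : Type*} [NormedAddCommGroup E] [NormedSpace ℂ E]
    (f : ℝ → E) (s : ℂ) : mellin f s = ∫ y : ℝ, cexp (s * y) • f (Real.exp y) := by
  rw [mellin, ← Real.range_exp, ← Set.image_univ, integral_image_eq_integral_abs_deriv_smul
    MeasurableSet.univ (fun y _ => (Real.hasDerivAt_exp y).hasDerivWithinAt)
    Real.exp_injective.injOn, setIntegral_univ]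
  refine integral_congr_ae (.of_forall fun y => ?_)
  have exp_mul_cpow_sub_one : (Real.exp y : ℂ) * (Real.exp y : ℂ) ^ (s - 1) = cexp (s * y) := by
    rw [cpow_def_of_ne_zero (mod_cast (Real.exp_pos y).ne'), ← ofReal_log (Real.exp_pos y).le,
      Real.log_exp, ofReal_exp, ← Complex.exp_add]
    ring_nf
  beta_reduce
  rw [abs_of_pos (Real.exp_pos y), ← exp_mul_cpow_sub_one, mul_smul, coe_smul]

/-- The integrand of Euler's integral for `Γ(a)` in the variable `y = log t`. -/
noncomputable def gammaKernel (a : ℂ) (y : ℝ) : ℂ := cexp (a * y - Real.exp y)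

lemma integral_gammaKernel {a : ℂ} (ha : 0 < a.re) : ∫ y, gammaKernel a y = Gamma a := by
  rw [Gamma_eq_integral ha, GammaIntegral_eq_mellin, mellin_eq_integral_cexp_smul]
  refine integral_congr_ae (.of_forall fun y => ?_)
  simp only [gammaKernel, sub_eq_add_neg, Complex.exp_add, smul_eq_mul, ofReal_exp, ofReal_neg]

end GammaKernel

section CallKernel

/-- The integrand of the bilateral Laplace transform at `b` of a call payoff with unit strike, as a
function of the log-price. -/
noncomputable def callKernel (b : ℂ) (x : ℝ) : ℂ :=
  (max (Real.exp x - 1) 0 : ℝ) * cexp (b * x)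

lemma callKernel_eq_indicator (b : ℂ) :
    callKernel b = (Set.Ioi 0).indicator fun x : ℝ => cexp ((b + 1) * x) - cexp (b * x) := by
  ext x
  by_cases hx : 0 < x
  · rw [Set.indicator_of_mem (Set.mem_Ioi.2 hx), callKernel,
      max_eq_left (sub_nonneg.2 (Real.one_le_exp hx.le)), add_one_mul, Complex.exp_add]
    push_cast
    ring
  · rw [Set.indicator_of_notMem (Set.notMem_Ioi.2 (not_lt.1 hx)), callKernel,
      max_eq_right (sub_nonpos.2 (Real.exp_le_one_iff.2 (not_lt.1 hx))), ofReal_zero, zero_mul]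

lemma integral_callKernel {b : ℂ} (hb : b.re < -1) : ∫ x, callKernel b x = 1 / (b * (b + 1)) := by
  have re_neg : b.re < 0 := by linarith
  have re_add_one_neg : (b + 1).re < 0 := by rw [add_re, one_re]; linarith
  have ne_zero : b ≠ 0 := by rintro rfl; exact re_neg.ne rfl
  have add_one_ne_zero : b + 1 ≠ 0 := fun h => re_add_one_neg.ne (by rw [h, zero_re])
  rw [callKernel_eq_indicator, integral_indicator measurableSet_Ioi,
    integral_sub (integrableOn_exp_mul_complex_Ioi re_add_one_neg 0)
      (integrableOn_exp_mul_complex_Ioi re_neg 0),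
    integral_exp_mul_complex_Ioi re_add_one_neg, integral_exp_mul_complex_Ioi re_neg]
  simp only [ofReal_zero, mul_zero, Complex.exp_zero]
  field_simp
  ring

end CallKernel

section DirichletKernel

variable {ι : Type*} [Fintype ι]

lemma re_sum_nonneg {a : ι → ℂ} (ha : ∀ i, 0 ≤ (a i).re) : 0 ≤ (∑ i, a i).re := by
  rw [re_sum]
  exact Finset.sum_nonneg fun i _ => ha i

/-- The total price to be exceeded by the first asset of the spread option with unit strike, given
the log-prices `y` of the other assets. -/
noncomputable def totalStrike (y : ι → ℝ) : ℝ := ∑ i, Real.exp (y i) + 1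

lemma totalStrike_pos (y : ι → ℝ) : 0 < totalStrike y := by
  unfold totalStrike
  positivity

lemma measurable_log_totalStrike : Measurable fun y : ι → ℝ => Real.log (totalStrike y) := by
  unfold totalStrike
  fun_prop

/-- The integrand `∏ t_i ^ a_i * (1 + ∑ t_i) ^ (-s)` of Dirichlet's integral with respect to the
multiplicative Haar measure, in the variables `y_i = log t_i`. -/
noncomputable def dirichletKernel (s : ℂ) (a : ι → ℂ) (y : ι → ℝ) : ℂ :=
  cexp (∑ i, a i * y i - s * Real.log (totalStrike y))

lemma gammaKernel_mul_prod_gammaKernel_add (s : ℂ) (a : ι → ℂ) (τ : ℝ) (y : ι → ℝ) :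
    gammaKernel (s - ∑ i, a i) τ * ∏ i, gammaKernel (a i) (y i + τ) =
      dirichletKernel s a y * gammaKernel s (τ + Real.log (totalStrike y)) := by
  unfold gammaKernel dirichletKernel
  rw [← Complex.exp_sum, ← Complex.exp_add, ← Complex.exp_add, Real.exp_add τ,
    Real.exp_log (totalStrike_pos y)]
  congr 1
  simp only [totalStrike, Real.exp_add, ofReal_add, ofReal_mul, ofReal_sum, ofReal_one, mul_add,
    Finset.sum_sub_distrib, Finset.sum_add_distrib, ← Finset.sum_mul]
  ring

lemma integral_dirichletKernel {s : ℂ} {a : ι → ℂ} (ha : ∀ i, 0 < (a i).re)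
    (has : (∑ i, a i).re < s.re) :
    ∫ y, dirichletKernel s a y = Gamma (s - ∑ i, a i) * (∏ i, Gamma (a i)) / Gamma s := by
  have sum_re_nonneg : 0 ≤ (∑ i, a i).re := re_sum_nonneg fun i => (ha i).le
  have s_re_pos : 0 < s.re := sum_re_nonneg.trans_lt has
  have sub_re_pos : 0 < (s - ∑ i, a i).re := by rwa [sub_re, sub_pos]
  rw [eq_div_iff (Gamma_ne_zero_of_re_pos s_re_pos)]
  calc (∫ y, dirichletKernel s a y) * Gamma s
    _ = ∫ p : (ι → ℝ) × ℝ,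
          dirichletKernel s a p.1 * gammaKernel s (p.2 + Real.log (totalStrike p.1)) := by
        rw [← integral_gammaKernel s_re_pos]
        exact (integral_mul_comp_add volume volume (dirichletKernel s a) (gammaKernel s)
          measurable_log_totalStrike).symm
    _ = ∫ p : ℝ × (ι → ℝ),
          gammaKernel (s - ∑ i, a i) p.1 * ∏ i, gammaKernel (a i) (p.2 i + p.1) := by
        simp only [gammaKernel_mul_prod_gammaKernel_add]
        exact integral_prod_swap (μ := volume) (ν := volume) fun p : ℝ × (ι → ℝ) =>
          dirichletKernel s a p.2 * gammaKernel s (p.1 + Real.log (totalStrike p.2))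
    _ = (∫ τ, gammaKernel (s - ∑ i, a i) τ) * ∫ y : ι → ℝ, ∏ i, gammaKernel (a i) (y i) :=
        integral_mul_comp_add volume volume (gammaKernel (s - ∑ i, a i))
          (fun y : ι → ℝ => ∏ i, gammaKernel (a i) (y i)) (g := fun τ _ => τ) (by fun_prop)
    _ = Gamma (s - ∑ i, a i) * ∏ i, Gamma (a i) := by
        rw [integral_fintype_prod_volume_eq_prod fun i => gammaKernel (a i),
          integral_gammaKernel sub_re_pos]
        simp only [integral_gammaKernel (ha _)]

end DirichletKernel

section SpreadPayoff

variable {ι : Type*} [Fintype ι]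

lemma max_exp_sub_sum_exp_sub_one (x : ℝ) (y : ι → ℝ) :
    max (Real.exp x - ∑ i, Real.exp (y i) - 1) 0 =
      totalStrike y * max (Real.exp (x + -Real.log (totalStrike y)) - 1) 0 := by
  have strike_pos := totalStrike_pos y
  rw [mul_max_of_nonneg _ _ strike_pos.le, mul_zero, Real.exp_add, Real.exp_neg,
    Real.exp_log strike_pos, mul_sub_one, mul_comm, inv_mul_cancel_right₀ strike_pos.ne',
    totalStrike, sub_sub]

lemma dirichletKernel_mul_callKernel_add_neg_log (b : ℂ) (a : ι → ℂ)
    (x : ℝ) (y : ι → ℝ) :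
    dirichletKernel (-b - 1) a y * callKernel b (x + -Real.log (totalStrike y)) =
      (max (Real.exp x - ∑ i, Real.exp (y i) - 1) 0 : ℝ) * cexp (b * x + ∑ i, a i * y i) := by
  have exp_log_strike : (totalStrike y : ℂ) = cexp (Real.log (totalStrike y)) := by
    rw [← ofReal_exp, Real.exp_log (totalStrike_pos y)]
  rw [max_exp_sub_sum_exp_sub_one, dirichletKernel, callKernel, mul_left_comm, ← Complex.exp_add,
    ofReal_mul, exp_log_strike, mul_comm (cexp _), mul_assoc, ← Complex.exp_add]
  congr 2
  push_cast
  ring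

lemma integral_prod_spreadPayoff_mul_cexp {b : ℂ} {a : ι → ℂ}
    (ha : ∀ i, 0 < (a i).re) (hab : (b + ∑ i, a i).re < -1) :
    ∫ p : (ι → ℝ) × ℝ, ((max (Real.exp p.2 - ∑ i, Real.exp (p.1 i) - 1) 0 : ℝ) : ℂ) *
        cexp (b * p.2 + ∑ i, a i * p.1 i) =
      Gamma (-1 - (b + ∑ i, a i)) * (∏ i, Gamma (a i)) / Gamma (1 - b) := by
  rw [add_re] at hab
  have sum_re_nonneg : 0 ≤ (∑ i, a i).re := re_sum_nonneg fun i => (ha i).le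
  have b_re_lt : b.re < -1 := by linarith
  have neg_b_ne_zero : -b ≠ 0 := fun h => by norm_num [neg_eq_zero.1 h] at b_re_lt
  have neg_b_sub_one_ne_zero : -b - 1 ≠ 0 := fun h => by
    norm_num [neg_eq_iff_eq_neg.1 (sub_eq_zero.1 h)] at b_re_lt
  have Gamma_one_sub : Gamma (1 - b) = b * (b + 1) * Gamma (-b - 1) := by
    rw [sub_eq_neg_add, Gamma_add_one _ neg_b_ne_zero, ← sub_add_cancel (-b) 1,
      Gamma_add_one _ neg_b_sub_one_ne_zero, sub_add_cancel]
    ring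
  have dirichlet_re_lt : (∑ i, a i).re < (-b - 1).re := by
    rw [sub_re, neg_re, one_re]
    linarith
  calc ∫ p : (ι → ℝ) × ℝ, ((max (Real.exp p.2 - ∑ i, Real.exp (p.1 i) - 1) 0 : ℝ) : ℂ) *
        cexp (b * p.2 + ∑ i, a i * p.1 i)
    _ = ∫ p : (ι → ℝ) × ℝ,
          dirichletKernel (-b - 1) a p.1 * callKernel b (p.2 + -Real.log (totalStrike p.1)) := by
        simp only [dirichletKernel_mul_callKernel_add_neg_log]
    _ = (∫ y, dirichletKernel (-b - 1) a y) * ∫ x, callKernel b x :=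
        integral_mul_comp_add volume volume (dirichletKernel (-b - 1) a) (callKernel b)
          (g := fun y => -Real.log (totalStrike y)) measurable_log_totalStrike.fun_neg
    _ = Gamma (-1 - (b + ∑ i, a i)) * (∏ i, Gamma (a i)) / Gamma (1 - b) := by
        rw [integral_dirichletKernel ha dirichlet_re_lt, integral_callKernel b_re_lt,
          Gamma_one_sub, div_mul_div_comm, mul_one, mul_comm (Gamma (-b - 1)),
          show -b - 1 - ∑ i, a i = -1 - (b + ∑ i, a i) by ring]

lemma integral_spreadPayoff_mul_cexp {N : ℕ} {a : Fin (N + 1) → ℂ}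
    (ha : ∀ m : Fin N, 0 < (a m.succ).re) (hsum : (∑ k, a k).re < -1) :
    ∫ y : Fin (N + 1) → ℝ,
        ((max (Real.exp (y 0) - ∑ m : Fin N, Real.exp (y m.succ) - 1) 0 : ℝ) : ℂ) *
          cexp (∑ k, a k * y k) =
      Gamma (-1 - ∑ k, a k) * (∏ m : Fin N, Gamma (a m.succ)) / Gamma (1 - a 0) := by
  simp only [Fin.sum_univ_succ (n := N)] at hsum ⊢
  rw [← integral_prod_spreadPayoff_mul_cexp ha hsum, Measure.volume_eq_prod, ← integral_prod_swap,
    ← Measure.volume_eq_prod,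
    ← (volume_preserving_piFinSuccAbove (fun _ : Fin (N + 1) => ℝ) 0).integral_comp']
  rfl

lemma exp_sum_mul_cexp_neg_I_mul_sum (u ε y : ι → ℝ) :
    (Real.exp (∑ k, y k * ε k) : ℂ) * cexp (-I * (∑ k, u k * y k : ℝ)) =
      cexp (∑ k, -I * (u k + I * ε k) * y k) := by
  rw [ofReal_exp, ← Complex.exp_add]
  push_cast
  rw [Finset.mul_sum, ← Finset.sum_add_distrib]
  congr 1
  refine Finset.sum_congr rfl fun k _ => ?_
  linear_combination (ε k : ℂ) * y k * I_mul_I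

end SpreadPayoff

theorem payoff_fourier_transform_eq_FS
    (n : ℕ) (hn : 2 ≤ n) (i₀ : Fin n) (hi₀ : (i₀ : ℕ) = 0)
    (ε : Fin n → ℝ) (hε : ∀ m, m ≠ i₀ → 0 < ε m)
    (hε1 : ε i₀ < -1 - ∑ m ∈ Finset.Ioi i₀, ε m)
    (FS : (Fin n → ℂ) → ℂ)
    (hFS : ∀ z : Fin n → ℂ, FS z =
      Complex.Gamma (Complex.I * (z i₀ + ∑ m ∈ Finset.Ioi i₀, z m) - 1) *
        (∏ m ∈ Finset.Ioi i₀, Complex.Gamma (-Complex.I * z m)) /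
        Complex.Gamma (Complex.I * z i₀ + 1)) :
    ∀ u : Fin n → ℝ,
      (∫ y : Fin n → ℝ,
          ((max (Real.exp (y i₀) - (∑ m ∈ Finset.Ioi i₀, Real.exp (y m)) - 1) 0 : ℝ) : ℂ) *
            (Real.exp (∑ k, y k * ε k) : ℂ) *
            Complex.exp (-Complex.I * (∑ k, u k * y k : ℝ)))
        = FS (fun k => (u k : ℂ) + Complex.I * (ε k : ℂ)) := by
  intro u
  obtain ⟨N, rfl⟩ : ∃ N, n = N + 1 := ⟨n - 1, by omega⟩
  obtain rfl : i₀ = 0 := Fin.ext hi₀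
  simp only [Fin.sum_Ioi_zero] at hε1
  have re_exponent (k) : (-I * ((u k : ℂ) + I * ε k)).re = ε k := by simp
  have exponent_re_pos (m : Fin N) : 0 < (-I * ((u m.succ : ℂ) + I * ε m.succ)).re :=
    (hε _ m.succ_ne_zero).trans_eq (re_exponent _).symm
  have sum_exponent_re_lt : (∑ k, -I * ((u k : ℂ) + I * ε k)).re < -1 := by
    rw [re_sum, Finset.sum_congr rfl fun k _ => re_exponent k, Fin.sum_univ_succ]
    linarith
  simp only [hFS, mul_assoc ((max _ _ : ℝ) : ℂ), exp_sum_mul_cexp_neg_I_mul_sum,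
    Fin.sum_Ioi_zero, Fin.prod_Ioi_zero]
  rw [integral_spreadPayoff_mul_cexp exponent_re_pos sum_exponent_re_lt, ← Finset.mul_sum,
    Fin.sum_univ_succ]
  ring_nf
end
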